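/- For every s | N, the rescaled partial dual I_ij^{*,s} = (I_ij^{#} ∩ I_ij[1/s], s·n) lies in the same genus of quaternary quadratic lattices as the I_ij, and hence is isometric to some lattice I_{i'j'}. -/

import Mathlib

open scoped Quaternion BigOperators Matrix

noncomputable section

namespace Rep

/-! ### Integral binary quadratic forms, class numbers, fundamental discriminants -/

/-- `T` is the matrix of an integral binary quadratic form, i.e. an integral symmetric
matrix `T = (2a, b; b, 2c)` (even diagonal). -/
def IsBinaryMatrix (T : Matrix (Fin 2) (Fin 2) ℤ) : Prop :=
  T 0 1 = T 1 0 ∧ (2 ∣ T 0 0) ∧ (2 ∣ T 1 1)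

/-- The signed discriminant `b² - 4ac` of `T = (2a, b; b, 2c)`. -/
def disc (T : Matrix (Fin 2) (Fin 2) ℤ) : ℤ := T 0 1 ^ 2 - T 0 0 * T 1 1

/-- `T = (2a, b; b, 2c)` is positive definite. -/
def PosDefBinary (T : Matrix (Fin 2) (Fin 2) ℤ) : Prop := 0 < T 0 0 ∧ disc T < 0

/-- `ε(T)`: the number of proper automorphs `U ∈ SL₂(ℤ)`, `UᵀTU = T`, of `T`. -/
def autCount (T : Matrix (Fin 2) (Fin 2) ℤ) : ℕ :=
  Set.ncard {U : Matrix.SpecialLinearGroup (Fin 2) ℤ |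
    (U : Matrix (Fin 2) (Fin 2) ℤ)ᵀ * T * U = T}

/-- proper (`SL₂(ℤ)`-) equivalence of binary forms. -/
def SLEquiv (T T' : Matrix (Fin 2) (Fin 2) ℤ) : Prop :=
  ∃ U : Matrix.SpecialLinearGroup (Fin 2) ℤ, (U : Matrix (Fin 2) (Fin 2) ℤ)ᵀ * T * U = T'

/-- Gauss-reduced positive definite binary form `(2a, b; b, 2c)`:
`-a < b ≤ a ≤ c`, and `b ≥ 0` if `a = c`. -/
def IsReduced (T : Matrix (Fin 2) (Fin 2) ℤ) : Prop :=
  -(T 0 0) < 2 * T 0 1 ∧ 2 * T 0 1 ≤ T 0 0 ∧ T 0 0 ≤ T 1 1 ∧ (T 0 0 = T 1 1 → 0 ≤ T 0 1)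

/-- A canonical set of representatives for the `SL₂(ℤ)`-equivalence classes of positive
definite integral binary quadratic forms of discriminant `-d`: the reduced forms. -/
def reducedForms (d : ℤ) : Set (Matrix (Fin 2) (Fin 2) ℤ) :=
  {T | IsBinaryMatrix T ∧ PosDefBinary T ∧ disc T = -d ∧ IsReduced T}

/-- The class number `h(-d)`: the number of `SL₂(ℤ)`-classes of primitive positive definite
integral binary quadratic forms of discriminant `-d`; for a fundamental discriminant `-d`
this is the class number of `ℚ(√-d)`. -/
def classNumber (d : ℤ) : ℕ :=
  Set.ncard {T | T ∈ reducedForms d ∧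
    Int.gcd (Int.gcd (T 0 0 / 2) (T 0 1)) (T 1 1 / 2) = 1}

/-- `σ₀(n)`, the number of divisors of `n`. -/
def sigma0 (n : ℕ) : ℕ := n.divisors.card

/-- `D` is a fundamental discriminant (the discriminant of the ring of integers of a
quadratic field). -/
def IsFundamentalDiscriminant (D : ℤ) : Prop :=
  D ≠ 1 ∧ ((D % 4 = 1 ∧ Squarefree D) ∨
    (D % 4 = 0 ∧ Squarefree (D / 4) ∧ (D / 4 % 4 = 2 ∨ D / 4 % 4 = 3)))

/-! ### Quadratic lattices via Gram matrices: representation numbers, genus, spinor genus -/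

/-- The number of representations of the binary form with (bilinear) Gram matrix `T` by the
quadratic lattice with (bilinear) Gram matrix `A`. -/
def rMat {m : ℕ} (A : Matrix (Fin m) (Fin m) ℤ) (T : Matrix (Fin 2) (Fin 2) ℤ) : ℕ :=
  Set.ncard {X : Matrix (Fin m) (Fin 2) ℤ | Xᵀ * A * X = T}

/-- The number of representations of the integer `t` by the quadratic form `q(x) = (xᵀAx)/2`
with bilinear Gram matrix `A`. -/
def rQuad {m : ℕ} (A : Matrix (Fin m) (Fin m) ℤ) (t : ℤ) : ℕ :=
  Set.ncard {x : Fin m → ℤ | x ⬝ᵥ A.mulVec x = 2 * t}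

/-- The order of the automorphism group of the lattice with Gram matrix `A`. -/
def autMat {m : ℕ} (A : Matrix (Fin m) (Fin m) ℤ) : ℕ :=
  Set.ncard {U : Matrix (Fin m) (Fin m) ℤ | Uᵀ * A * U = A}

/-- Integral equivalence (isometry) of Gram matrices. -/
def ZEquiv {m : ℕ} (A B : Matrix (Fin m) (Fin m) ℤ) : Prop :=
  ∃ U : Matrix (Fin m) (Fin m) ℤ, IsUnit U.det ∧ Uᵀ * A * U = B

/-- Equivalence of Gram matrices over the `p`-adic integers `ℤ_p`. -/
def ZpEquiv {m : ℕ} (p : ℕ) (hp : p.Prime) (A B : Matrix (Fin m) (Fin m) ℤ) : Prop :=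
  have : Fact p.Prime := ⟨hp⟩
  ∃ U : Matrix (Fin m) (Fin m) ℤ_[p], IsUnit U.det ∧
    Uᵀ * A.map (Int.cast : ℤ → ℤ_[p]) * U = B.map (Int.cast : ℤ → ℤ_[p])

/-- `A` is positive definite (over `ℝ`). -/
def PosDefMat {m : ℕ} (A : Matrix (Fin m) (Fin m) ℤ) : Prop :=
  (A.map (Int.cast : ℤ → ℝ)).PosDef

/-- Two positive definite integral lattices are in the same genus iff they are equivalent
over all `ℤ_p` (and over `ℝ`, which is automatic for positive definite ones). -/
def InSameGenus {m : ℕ} (A B : Matrix (Fin m) (Fin m) ℤ) : Prop :=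
  PosDefMat A ∧ PosDefMat B ∧ ∀ (p : ℕ) (hp : p.Prime), ZpEquiv p hp A B

/-- The reflection in the vector `v` of the quadratic space with Gram matrix `A`. -/
def reflMat {K : Type*} [Field K] {m : ℕ} (A : Matrix (Fin m) (Fin m) K) (v : Fin m → K) :
    Matrix (Fin m) (Fin m) K :=
  1 - (2 / (v ⬝ᵥ A.mulVec v)) • (Matrix.vecMulVec v v * A)

/-- `U` is a rotation (proper isometry) of the quadratic space with Gram matrix `A`
with spinor norm (represented by) `θ`: `U` is a product of an even number of reflections
in anisotropic vectors `v l`, and `θ = ∏ q(v l)`. -/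
def IsRotationWithSpinorNorm {K : Type*} [Field K] {m : ℕ} (A U : Matrix (Fin m) (Fin m) K)
    (θ : K) : Prop :=
  ∃ (r : ℕ) (v : Fin r → (Fin m → K)), Even r ∧ (∀ l, v l ⬝ᵥ A.mulVec (v l) ≠ 0) ∧
    U = (List.ofFn fun l => reflMat A (v l)).prod ∧
    θ = ∏ l : Fin r, (v l ⬝ᵥ A.mulVec (v l)) / 2

/-- The lattices with Gram matrices `A` and `B` lie in the same spinor genus: there is a
rational isometry `S` of `A` and a rational equivalence `C` from `A` to `B` which at every
prime `p` factors as `S` times a rotation of trivial spinor norm times a `ℤ_p`-unit. -/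
def SameSpinorGenus {m : ℕ} (A B : Matrix (Fin m) (Fin m) ℤ) : Prop :=
  InSameGenus A B ∧
  ∃ C S : Matrix (Fin m) (Fin m) ℚ,
    Cᵀ * A.map (Int.cast : ℤ → ℚ) * C = B.map (Int.cast : ℤ → ℚ) ∧
    Sᵀ * A.map (Int.cast : ℤ → ℚ) * S = A.map (Int.cast : ℤ → ℚ) ∧
    ∀ (p : ℕ) (hp : p.Prime),
      have : Fact p.Prime := ⟨hp⟩
      ∃ (Sig : Matrix (Fin m) (Fin m) ℚ_[p]) (θ c : ℚ_[p]) (U : Matrix (Fin m) (Fin m) ℤ_[p]),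
        IsRotationWithSpinorNorm (A.map (Int.cast : ℤ → ℚ_[p])) Sig θ ∧ c ≠ 0 ∧ θ = c ^ 2 ∧
        IsUnit U.det ∧
        C.map (Rat.cast : ℚ → ℚ_[p]) =
          S.map (Rat.cast : ℚ → ℚ_[p]) * Sig * U.map (fun x : ℤ_[p] => (x : ℚ_[p]))

/-- A system of representatives for the isometry classes of lattices in the genus of `A`. -/
structure GenusReps {m : ℕ} (A : Matrix (Fin m) (Fin m) ℤ) where
  reps : Finset (Matrix (Fin m) (Fin m) ℤ)
  mem_genus : ∀ B ∈ reps, InSameGenus A B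
  complete : ∀ B, InSameGenus A B → ∃ C ∈ reps, ZEquiv C B
  inequiv : ∀ B ∈ reps, ∀ C ∈ reps, ZEquiv B C → B = C

/-- The mass `μ` of the genus of `A`. -/
def mass {m : ℕ} {A : Matrix (Fin m) (Fin m) ℤ} (G : GenusReps A) : ℝ :=
  ∑ B ∈ G.reps, (1 : ℝ) / autMat B

/-- Siegel's weighted average `r(gen(A), T)` of the representation numbers of the binary
form `T` over the classes in the genus of `A`. -/
def genusAvgBinary {m : ℕ} {A : Matrix (Fin m) (Fin m) ℤ} (G : GenusReps A)
    (T : Matrix (Fin 2) (Fin 2) ℤ) : ℝ :=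
  (∑ B ∈ G.reps, (rMat B T : ℝ) / autMat B) / mass G

/-- Siegel's weighted average `r(gen(A), t)` of the representation numbers of the integer
`t` over the classes in the genus of `A`. -/
def genusAvgQuad {m : ℕ} {A : Matrix (Fin m) (Fin m) ℤ} (G : GenusReps A) (t : ℤ) : ℝ :=
  (∑ B ∈ G.reps, (rQuad B t : ℝ) / autMat B) / mass G

/-- `o_max`: the maximal order of the automorphism group of a lattice in the genus of `A`. -/
def oMax {m : ℕ} {A : Matrix (Fin m) (Fin m) ℤ} (G : GenusReps A) : ℕ :=
  G.reps.sup autMat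

/-- `ℓ • A⁻¹` is again integral with even diagonal. -/
def EvenIntegralScaledInv {m : ℕ} (A : Matrix (Fin m) (Fin m) ℤ) (ℓ : ℕ) : Prop :=
  (∀ i j, ∃ c : ℤ, (ℓ : ℚ) * (A.map (Int.cast : ℤ → ℚ))⁻¹ i j = c) ∧
    ∀ i, ∃ c : ℤ, (ℓ : ℚ) * (A.map (Int.cast : ℤ → ℚ))⁻¹ i i = 2 * c

/-- `ℓ` is the level of the (even) lattice with bilinear Gram matrix `A`. -/
def IsLevelOf {m : ℕ} (A : Matrix (Fin m) (Fin m) ℤ) (ℓ : ℕ) : Prop :=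
  0 < ℓ ∧ EvenIntegralScaledInv A ℓ ∧
    ∀ ℓ' : ℕ, 0 < ℓ' → EvenIntegralScaledInv A ℓ' → ℓ ∣ ℓ'

/-- `d` is represented primitively by (the `ℤ_p`-completion of) the ternary lattice with Gram
matrix `A` over every `ℤ_p`. -/
def LocallyPrimitivelyRepresents (A : Matrix (Fin 3) (Fin 3) ℤ) (d : ℤ) : Prop :=
  ∀ (p : ℕ) (hp : p.Prime),
    have : Fact p.Prime := ⟨hp⟩
    ∃ x : Fin 3 → ℤ_[p], (∃ i, IsUnit (x i)) ∧
      x ⬝ᵥ (A.map (Int.cast : ℤ → ℤ_[p])).mulVec x = ((2 * d : ℤ) : ℤ_[p])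

/-- `d` is represented by the ternary lattice with Gram matrix `A` over every `ℤ_p`. -/
def LocallyRepresents (A : Matrix (Fin 3) (Fin 3) ℤ) (d : ℤ) : Prop :=
  ∀ (p : ℕ) (hp : p.Prime),
    have : Fact p.Prime := ⟨hp⟩
    ∃ x : Fin 3 → ℤ_[p], x ⬝ᵥ (A.map (Int.cast : ℤ → ℤ_[p])).mulVec x = ((2 * d : ℤ) : ℤ_[p])

/-- The prime `p` is split in the imaginary quadratic field `ℚ(√-d)`. -/
def SplitIn (d : ℤ) (p : ℕ) (hp : p.Prime) : Prop :=
  if p = 2 then (-d) % 8 = 1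
  else
    have : Fact p.Prime := ⟨hp⟩
    legendreSym p (-d) = 1

/-- The prime `p` is inert in the imaginary quadratic field `ℚ(√-d)`. -/
def InertIn (d : ℤ) (p : ℕ) (hp : p.Prime) : Prop :=
  if p = 2 then (-d) % 8 = 5
  else
    have : Fact p.Prime := ⟨hp⟩
    legendreSym p (-d) = -1

end Rep
namespace Rep

/-! ### Quaternion algebras over ℚ, Eichler orders, ideal classes -/

/-- The reduced trace of a quaternion. -/
def trd {a b : ℚ} (x : ℍ[ℚ, a, b]) : ℚ := 2 * x.re

/-- The reduced norm `n` of a quaternion. -/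
def nrd {a b : ℚ} (x : ℍ[ℚ, a, b]) : ℚ := (x * star x).re

/-- The bilinear form `b(x, y) = tr(x ȳ)` associated to the reduced norm form;
note `b(x, x) = 2 n(x)`. -/
def qbil {a b : ℚ} (x y : ℍ[ℚ, a, b]) : ℚ := (x * star y + y * star x).re

/-- The quaternion algebra `(a, b / ℚ)` is ramified at infinity, i.e. `ℍ[ℝ, a, b]` is a
division algebra. -/
def RamifiedAtInfinity (a b : ℚ) : Prop :=
  ∀ x : ℍ[ℝ, (a : ℝ), (b : ℝ)], x ≠ 0 → IsUnit x

/-- The quaternion algebra `(a, b / ℚ)` is ramified at the prime `p`, i.e. `ℍ[ℚ_p, a, b]`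
is a division algebra. -/
def RamifiedAt (a b : ℚ) (p : ℕ) (hp : p.Prime) : Prop :=
  have : Fact p.Prime := ⟨hp⟩
  ∀ x : ℍ[ℚ_[p], (a : ℚ_[p]), (b : ℚ_[p])], x ≠ 0 → IsUnit x

/-- `M` is a full `ℤ`-lattice of rank `m` in the quaternion algebra. -/
def IsLattice {a b : ℚ} (m : ℕ) (M : Submodule ℤ ℍ[ℚ, a, b]) : Prop :=
  ∃ v : Fin m → ℍ[ℚ, a, b], LinearIndependent ℚ v ∧ Submodule.span ℤ (Set.range v) = M

/-- `A` is a Gram matrix (with respect to the bilinear form `b(x,y) = tr(x ȳ)`) of a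
`ℤ`-basis of (the `ℤ`-span of) `M`. -/
def IsGramOf {a b : ℚ} {m : ℕ} (M : Set ℍ[ℚ, a, b]) (A : Matrix (Fin m) (Fin m) ℤ) : Prop :=
  ∃ v : Fin m → ℍ[ℚ, a, b], LinearIndependent ℚ v ∧
    Submodule.span ℤ (Set.range v) = Submodule.span ℤ M ∧
    ∀ i j, (A i j : ℚ) = qbil (v i) (v j)

/-- `A` is a Gram matrix of `M` for the quadratic form rescaled by the factor `s`. -/
def IsGramOfScaled {a b : ℚ} {m : ℕ} (s : ℕ) (M : Set ℍ[ℚ, a, b])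
    (A : Matrix (Fin m) (Fin m) ℤ) : Prop :=
  ∃ v : Fin m → ℍ[ℚ, a, b], LinearIndependent ℚ v ∧
    Submodule.span ℤ (Set.range v) = Submodule.span ℤ M ∧
    ∀ i j, (A i j : ℚ) = s * qbil (v i) (v j)

/-- An order in the quaternion algebra: a full lattice which is a subring. -/
def IsOrder {a b : ℚ} (O : Submodule ℤ ℍ[ℚ, a, b]) : Prop :=
  IsLattice 4 O ∧ (1 : ℍ[ℚ, a, b]) ∈ O ∧ ∀ x ∈ O, ∀ y ∈ O, x * y ∈ O

/-- The left order of a lattice `I`. -/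
def leftOrderSet {a b : ℚ} (I : Set ℍ[ℚ, a, b]) : Set ℍ[ℚ, a, b] :=
  {x | ∀ y ∈ I, x * y ∈ I}

/-- The right order of a lattice `I`. -/
def rightOrderSet {a b : ℚ} (I : Set ℍ[ℚ, a, b]) : Set ℍ[ℚ, a, b] :=
  {x | ∀ y ∈ I, y * x ∈ I}

/-- The order `O` has reduced discriminant `N`, i.e. the Gram matrix of the norm form on `O`
has determinant `N²`.  For squarefree `N` this characterizes the Eichler orders of level `N`
(hereditary orders). -/
def HasReducedDiscriminant {a b : ℚ} (O : Submodule ℤ ℍ[ℚ, a, b]) (N : ℕ) : Prop :=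
  ∃ A : Matrix (Fin 4) (Fin 4) ℤ, IsGramOf (O : Set ℍ[ℚ, a, b]) A ∧ A.det = (N : ℤ) ^ 2

/-- The pairs `(x, y) ∈ M × M` representing the binary form `T = (2a, b; b, 2c)`, i.e. with
`n(x) = a`, `b(x,y) = b`, `n(y) = c` (equivalently, with bilinear Gram matrix `T`). -/
def repPairs {a b : ℚ} (M : Set ℍ[ℚ, a, b]) (T : Matrix (Fin 2) (Fin 2) ℤ) :
    Set (ℍ[ℚ, a, b] × ℍ[ℚ, a, b]) :=
  {xy | xy.1 ∈ M ∧ xy.2 ∈ M ∧ qbil xy.1 xy.1 = T 0 0 ∧ qbil xy.1 xy.2 = T 0 1 ∧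
    qbil xy.2 xy.2 = T 1 1}

/-- `r(M, T)`: the number of representations of the binary form `T` by the quaternary
lattice `M` (with the reduced norm as quadratic form). -/
def rLat {a b : ℚ} (M : Set ℍ[ℚ, a, b]) (T : Matrix (Fin 2) (Fin 2) ℤ) : ℕ :=
  Set.ncard (repPairs M T)

/-- As `rLat`, but with the quadratic form rescaled by the factor `s`. -/
def rLatScaled {a b : ℚ} (s : ℕ) (M : Set ℍ[ℚ, a, b]) (T : Matrix (Fin 2) (Fin 2) ℤ) : ℕ :=
  Set.ncard {xy : ℍ[ℚ, a, b] × ℍ[ℚ, a, b] | xy.1 ∈ M ∧ xy.2 ∈ M ∧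
    (s : ℚ) * qbil xy.1 xy.1 = T 0 0 ∧ (s : ℚ) * qbil xy.1 xy.2 = T 0 1 ∧
    (s : ℚ) * qbil xy.2 xy.2 = T 1 1}

/-- The averaged representation number `r(M, d) = Σ_T r(M, T)/ε(T)`, the sum over the
`SL₂(ℤ)`-classes of integral binary forms of discriminant `-d`. -/
def rAvg {a b : ℚ} (M : Set ℍ[ℚ, a, b]) (d : ℤ) : ℝ :=
  ∑ᶠ T ∈ reducedForms d, (rLat M T : ℝ) / autCount T

/-- The dual lattice `M^#` of `M` with respect to `b(x,y) = tr(x ȳ)`. -/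
def dualLattice {a b : ℚ} (M : Set ℍ[ℚ, a, b]) : Set ℍ[ℚ, a, b] :=
  {x | ∀ y ∈ M, ∃ m : ℤ, qbil x y = m}

/-- The partial localization `M[1/s]` of `M`. -/
def locInv {a b : ℚ} (s : ℕ) (M : Submodule ℤ ℍ[ℚ, a, b]) : Set ℍ[ℚ, a, b] :=
  {x | ∃ k : ℕ, ((s : ℚ) ^ k) • x ∈ M}

/-- The data of an Eichler order `R` of squarefree level `N = N₁N₂` in the (definite)
quaternion algebra over `ℚ` ramified exactly at `∞` and the primes dividing `N₁`, together
with the ideals `I_ij = y_i R y_j⁻¹` coming from a double coset decomposition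
`D^×_𝔸 = ∪_j D^× y_j R^×_𝔸` (equivalently: a complete system of representatives of the
left ideal classes and their linking ideals), normalized to have reduced norm `ℤ`. -/
structure EichlerSetting (N₁ N₂ : ℕ) where
  a : ℚ
  b : ℚ
  N₁_pos : 0 < N₁
  N₂_pos : 0 < N₂
  squarefree : Squarefree (N₁ * N₂)
  odd_ram : Odd N₁.primeFactors.card
  ram_inf : RamifiedAtInfinity a b
  ram_iff : ∀ (p : ℕ) (hp : p.Prime), RamifiedAt a b p hp ↔ p ∣ N₁
  /-- the class number of the Eichler order -/
  h : ℕ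
  h_pos : 0 < h
  /-- the orders `R_i = y_i R y_i⁻¹`; `R = R_0` -/
  Rord : Fin h → Submodule ℤ ℍ[ℚ, a, b]
  /-- the ideals `I_ij = y_i R y_j⁻¹` -/
  I : Fin h → Fin h → Submodule ℤ ℍ[ℚ, a, b]
  Rord_order : ∀ i, IsOrder (Rord i)
  Rord_disc : ∀ i, HasReducedDiscriminant (Rord i) (N₁ * N₂)
  I_lattice : ∀ i j, IsLattice 4 (I i j)
  I_diag : ∀ i, I i i = Rord i
  I_left : ∀ i j, leftOrderSet (I i j : Set ℍ[ℚ, a, b]) = (Rord i : Set ℍ[ℚ, a, b])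
  I_right : ∀ i j, rightOrderSet (I i j : Set ℍ[ℚ, a, b]) = (Rord j : Set ℍ[ℚ, a, b])
  I_nrd_integral : ∀ i j, ∀ x ∈ I i j, ∃ m : ℤ, nrd x = m
  I_nrd_primitive : ∀ i j, (1 : ℚ) ∈ Submodule.span ℤ (nrd '' (I i j : Set ℍ[ℚ, a, b]))
  /-- for fixed `i`, the `I i j` represent all classes of left `R_i`-ideals -/
  classes_complete : ∀ (i : Fin h) (J : Submodule ℤ ℍ[ℚ, a, b]), IsLattice 4 J →
    leftOrderSet (J : Set ℍ[ℚ, a, b]) = (Rord i : Set ℍ[ℚ, a, b]) →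
    ∃ (j : Fin h) (u : (ℍ[ℚ, a, b])ˣ),
      J = Submodule.map (LinearMap.mulRight ℤ (u : ℍ[ℚ, a, b])) (I i j)
  classes_distinct : ∀ (i j j' : Fin h) (u : (ℍ[ℚ, a, b])ˣ),
    I i j' = Submodule.map (LinearMap.mulRight ℤ (u : ℍ[ℚ, a, b])) (I i j) → j = j'

namespace EichlerSetting

variable {N₁ N₂ : ℕ} (S : EichlerSetting N₁ N₂)

/-- The Eichler order `R` itself. -/
def R : Submodule ℤ ℍ[ℚ, S.a, S.b] := S.Rord ⟨0, S.h_pos⟩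

/-- The ternary lattice `L_i = {x ∈ ℤ·1 + 2R_i | tr(x) = 0}`. -/
def L (i : Fin S.h) : Set ℍ[ℚ, S.a, S.b] :=
  {x | (∃ m : ℤ, ∃ r ∈ S.Rord i, x = m • (1 : ℍ[ℚ, S.a, S.b]) + 2 • r) ∧ x + star x = 0}

/-- `e_i`, the number of units of the order `R_i`. -/
def units (i : Fin S.h) : ℕ :=
  Set.ncard {x : ℍ[ℚ, S.a, S.b] | x ∈ S.Rord i ∧ nrd x = 1}

/-- The underlying lattice `I_ij^# ∩ I_ij[1/s]` of the rescaled partial dual `I_ij^{*,s}`. -/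
def pd (i j : Fin S.h) (s : ℕ) : Set ℍ[ℚ, S.a, S.b] :=
  dualLattice (S.I i j : Set ℍ[ℚ, S.a, S.b]) ∩ locInv s (S.I i j)

/-- `r(rpd(I_ij, N'), T) = Σ_{s ∣ N'} r(I_ij^{*,s}, T)`: the total number of representations
of `T` by the rescaled partial duals `I_ij^{*,s}`, `s ∣ N'`. -/
def rRpd (i j : Fin S.h) (N' : ℕ) (T : Matrix (Fin 2) (Fin 2) ℤ) : ℕ :=
  ∑ s ∈ N'.divisors, rLatScaled s (S.pd i j s) T

/-- `r(rpd(I_ij, N'), d) = Σ_{s ∣ N'} r(I_ij^{*,s}, d)`, averaged over the classes of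
binary forms of discriminant `-d`. -/
def rRpdAvg (i j : Fin S.h) (N' : ℕ) (d : ℤ) : ℝ :=
  ∑ᶠ T ∈ reducedForms d, (S.rRpd i j N' T : ℝ) / autCount T

end EichlerSetting

end Rep

namespace Rep

/-!
Write `N = st`. The partial dual `I^# ∩ s⁻¹I` of `I = I_ij` is again a left ideal with left order
`R_i`: an element `z` stabilizing it satisfies `sz ∈ R_i` and `tz ∈ R_i`, and `s`, `t` are coprime.
Completeness of the ideal classes therefore gives `I^# ∩ s⁻¹I = I_ij' u` for some `j'` and some
unit `u`. On the partial dual the form `s·n` is integral, and its values have no common prime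
factor, since otherwise `I^#/I` would be too small for the discriminant `N²`. Hence `s·n(u) = 1`,
and right multiplication by `u` is an isometry from `I_ij'` onto the rescaled partial dual.

That `I_ij` and `I_ij'` share a genus is local: at each prime `p` both contain `R_i x` with index
and `n(x)` prime to `p`, so they are similar to `R_i` by `p`-adic units, and every unit of `ℤ_p` is
the factor of a similitude of `R_i`, namely of right multiplication by an element of `ℤ_p[r]` for
some `r ∈ R_i` whose discriminant is prime to `p`.
-/

/-! ### Integers, finite abelian groups and determinants -/

/-- The integers as a subring of `ℚ`, used to say that a rational number is integral. -/
abbrev intSubring : Subring ℚ := ⊥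

theorem mem_intSubring {q : ℚ} : q ∈ intSubring ↔ ∃ m : ℤ, q = m := by
  simp only [intSubring, Subring.mem_bot, eq_comm]

theorem mem_intSubring_of_pow_mem {q : ℚ} {n : ℕ} (hn : 0 < n) (h : q ^ n ∈ intSubring) :
    q ∈ intSubring := by
  obtain ⟨m, hm⟩ := Subring.mem_bot.1 h
  have hq : IsIntegral ℤ q := .of_pow hn (hm ▸ isIntegral_algebraMap)
  obtain ⟨k, hk⟩ := IsIntegrallyClosed.isIntegral_iff.1 hq
  exact Subring.mem_bot.2 ⟨k, by simpa using hk⟩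

theorem intCast_div_mem_intSubring {m d : ℤ} (hd : d ≠ 0) :
    (m / d : ℚ) ∈ intSubring ↔ d ∣ m := by
  have hd' : (d : ℚ) ≠ 0 := mod_cast hd
  simp only [mem_intSubring, div_eq_iff hd', dvd_def, mul_comm d]
  exact exists_congr fun k => by norm_cast

theorem gcd_nsmul_mem {S G : Type*} [AddCommGroup G] [SetLike S G] [AddSubgroupClass S G] {H : S}
    {m n : ℕ} {x : G} (hm : m • x ∈ H) (hn : n • x ∈ H) : m.gcd n • x ∈ H := by
  rw [← natCast_zsmul] at hm hn ⊢
  rw [Nat.gcd_eq_gcd_ab, add_smul, mul_comm (m : ℤ), mul_comm (n : ℤ), mul_smul, mul_smul]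
  exact add_mem (zsmul_mem hm _) (zsmul_mem hn _)

theorem gcd_mul_mem_intSubring {m n : ℕ} {q : ℚ} (hm : m * q ∈ intSubring)
    (hn : n * q ∈ intSubring) : m.gcd n * q ∈ intSubring := by
  rw [← nsmul_eq_mul] at hm hn ⊢
  exact gcd_nsmul_mem hm hn

theorem gcd_pow_mul_eq_left {s t k : ℕ} (h : s.Coprime t) (hk : k ≠ 0) :
    (s ^ k).gcd (s * t) = s := by
  obtain ⟨l, rfl⟩ := Nat.exists_eq_succ_of_ne_zero hk
  rw [pow_succ', Nat.gcd_mul_left, (h.pow_left l).gcd_eq_one, mul_one]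

theorem exists_addOrderOf_eq_prime_and_nsmul_mem_zmultiples {Q : Type*} [AddCommGroup Q]
    [Finite Q] {p k : ℕ} (hp : p.Prime) (hQ : Nat.card Q = p * k) :
    ∃ y : Q, addOrderOf y = p ∧ ∀ z : Q, k • z ∈ AddSubgroup.zmultiples y := by
  have : Fact p.Prime := ⟨hp⟩
  obtain ⟨y, hy⟩ := exists_prime_addOrderOf_dvd_card' (G := Q) p (hQ ▸ dvd_mul_right p k)
  refine ⟨y, hy, fun z => ?_⟩
  have hcard : Nat.card (Q ⧸ AddSubgroup.zmultiples y) = k := by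
    have h := AddSubgroup.card_eq_card_quotient_mul_card_addSubgroup (AddSubgroup.zmultiples y)
    rw [hQ, Nat.card_zmultiples, hy, mul_comm] at h
    exact (Nat.eq_of_mul_eq_mul_right hp.pos h).symm
  rw [← QuotientAddGroup.eq_zero_iff, QuotientAddGroup.mk_nsmul, ← hcard]
  exact card_nsmul_eq_zero'

theorem pow_card_dvd_mul_det_vecMulVec_add {n K : Type*} [Fintype n] [DecidableEq n] [CommRing K]
    (p : K) (u v : n → K) (M : Matrix n n K) :
    p ^ Fintype.card n ∣ p * (Matrix.vecMulVec u v + p • M).det := by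
  let row : Matrix Unit n K := Matrix.replicateRow Unit v
  let col : Matrix n Unit K := Matrix.replicateCol Unit u
  have hfactor : Matrix.fromBlocks 1 0 0 (p • 1) * Matrix.fromBlocks (p • 1) (-row) col M
      = Matrix.fromBlocks 1 (-row) col (p • M) * Matrix.fromBlocks (p • 1) 0 0 1 := by
    simp [Matrix.fromBlocks_multiply]
  have hdet := congrArg Matrix.det hfactor
  have hcorank : p • M - col * -row = Matrix.vecMulVec u v + p • M := by
    rw [Matrix.mul_neg, sub_neg_eq_add, add_comm, Matrix.vecMulVec_eq Unit]
  rw [Matrix.det_mul, Matrix.det_mul, Matrix.det_fromBlocks_zero₁₂, Matrix.det_fromBlocks_zero₁₂,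
    Matrix.det_fromBlocks_one₁₁, hcorank, Matrix.det_smul] at hdet
  refine ⟨(Matrix.fromBlocks (p • 1) (-row) col M).det, ?_⟩
  simpa [mul_comm] using hdet.symm

section Cokernel

variable {n : Type*} [Fintype n] [DecidableEq n]

theorem card_quotient_span_row_eq_natAbs_det {C : Matrix n n ℤ} (hC : C.det ≠ 0) :
    Nat.card ((n → ℤ) ⧸ Submodule.span ℤ (Set.range C.row)) = C.det.natAbs := by
  have hrows : LinearIndependent ℤ C.row := Matrix.linearIndependent_rows_of_det_ne_zero hC
  rw [← Submodule.natAbs_det_basis_change (Pi.basisFun ℤ n) _ (Module.Basis.span hrows),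
    Module.Basis.det_apply, ← Matrix.det_transpose C]
  congr 2
  ext i j
  simp [Module.Basis.toMatrix_apply, Module.Basis.span_apply]

theorem exists_cyclic_generator_of_det_eq_prime_mul {C : Matrix n n ℤ} {p k : ℕ} (hp : p.Prime)
    (hk : k ≠ 0) (hC : C.det.natAbs = p * k) :
    ∃ y : n → ℤ, (∀ z : n → ℤ, ∃ (c : n → ℤ) (l : ℤ), k • z = c ᵥ* C + l • y) ∧
      ∀ (l : ℤ) (c : n → ℤ), l • y = c ᵥ* C → (p : ℤ) ∣ l := by
  have hC0 : C.det ≠ 0 := Int.natAbs_ne_zero.1 (hC ▸ mul_ne_zero hp.ne_zero hk)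
  set L := Submodule.span ℤ (Set.range C.row)
  have hcard : Nat.card ((n → ℤ) ⧸ L) = p * k := hC ▸ card_quotient_span_row_eq_natAbs_det hC0
  have : Finite ((n → ℤ) ⧸ L) :=
    Nat.finite_of_card_ne_zero (hcard ▸ mul_ne_zero hp.ne_zero hk)
  have mem_L {z : n → ℤ} : z ∈ L ↔ ∃ c : n → ℤ, z = c ᵥ* C := by
    rw [Submodule.mem_span_range_iff_exists_fun]
    simp only [Matrix.vecMul_eq_sum, Matrix.row, eq_comm]
  obtain ⟨ybar, horder, hcyclic⟩ := exists_addOrderOf_eq_prime_and_nsmul_mem_zmultiples hp hcard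
  obtain ⟨y, rfl⟩ := Submodule.Quotient.mk_surjective L ybar
  refine ⟨y, fun z => ?_, fun l c hlc => ?_⟩
  · obtain ⟨l, hl⟩ := AddSubgroup.mem_zmultiples_iff.1 (hcyclic (Submodule.Quotient.mk z))
    rw [← Submodule.Quotient.mk_smul, ← Submodule.Quotient.mk_smul, eq_comm,
      Submodule.Quotient.eq] at hl
    obtain ⟨c, hc⟩ := mem_L.1 hl
    exact ⟨c, l, eq_add_of_sub_eq hc⟩
  · rw [← horder, addOrderOf_dvd_iff_zsmul_eq_zero, ← Submodule.Quotient.mk_smul,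
      Submodule.Quotient.mk_eq_zero]
    exact mem_L.2 ⟨c, hlc⟩

end Cokernel

/-! ### Units represented by binary forms over `ℤ_p` -/

section BinaryForms

open Polynomial

theorem exists_binary_form_eq {F : Type*} [Field F] [Finite F] (t c w : F)
    (h : t ^ 2 - 4 * c ≠ 0) :
    ∃ x y : F, x ^ 2 + t * x * y + c * y ^ 2 = w := by
  have := Fintype.ofFinite F
  by_cases h2 : ringChar F = 2
  · obtain ⟨x, hx⟩ := FiniteField.isSquare_of_char_two h2 w
    exact ⟨x, 0, by rw [hx]; ring⟩
  -- Completing the square turns the form into `x ^ 2 - (t ^ 2 - 4 * c) * y ^ 2`.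
  have hd : -(t ^ 2 - 4 * c) ≠ 0 := neg_ne_zero.2 h
  obtain ⟨x, y, hxy⟩ := FiniteField.exists_root_sum_quadratic
    (f := (X : F[X]) ^ 2 - C (4 * w)) (g := C (-(t ^ 2 - 4 * c)) * X ^ 2)
    (degree_X_pow_sub_C two_pos _) (degree_C_mul_X_pow 2 hd)
    (FiniteField.odd_card_of_char_ne_two h2)
  have h2' : (2 : F) ≠ 0 := Ring.two_ne_zero h2
  refine ⟨(x - t * y) / 2, y, ?_⟩
  simp only [eval_sub, eval_pow, eval_X, eval_C, eval_mul] at hxy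
  field_simp
  linear_combination hxy

variable {p : ℕ} [Fact p.Prime]

theorem exists_root_of_quadratic_root_zmod (α β γ : ℤ_[p]) (z : ZMod p)
    (hz : α.toZMod * z ^ 2 + β.toZMod * z + γ.toZMod = 0)
    (hz' : 2 * α.toZMod * z + β.toZMod ≠ 0) : ∃ x : ℤ_[p], α * x ^ 2 + β * x + γ = 0 := by
  obtain ⟨x₀, rfl⟩ := ZMod.ringHom_surjective (PadicInt.toZMod (p := p)) z
  let F : ℤ_[p][X] := C α * X ^ 2 + C β * X + C γ
  have hF (x : ℤ_[p]) : F.aeval x = α * x ^ 2 + β * x + γ := by simp [F]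
  have hF' : F.derivative.aeval x₀ = 2 * α * x₀ + β := by
    simp only [F, derivative_C_mul, derivative_X_pow, derivative_X, derivative_C,
      map_add, map_mul, map_pow, aeval_C, aeval_X, map_one, map_zero, map_natCast,
      Algebra.algebraMap_self_apply]
    push_cast
    ring
  have hroot : ‖F.aeval x₀‖ < 1 := by
    rw [← PadicInt.mem_nonunits, ← IsLocalRing.mem_maximalIdeal, ← PadicInt.ker_toZMod,
      RingHom.mem_ker, hF]
    simpa using hz
  have hsimple : ‖F.derivative.aeval x₀‖ = 1 := by
    rw [← PadicInt.isUnit_iff, ← IsLocalRing.notMem_maximalIdeal, ← PadicInt.ker_toZMod,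
      RingHom.mem_ker, hF']
    simpa only [map_add, map_mul, map_ofNat] using hz'
  obtain ⟨x, hx, -⟩ := hensels_lemma (F := F) (a := x₀) (by rwa [hsimple, one_pow])
  exact ⟨x, hF x ▸ hx⟩

theorem isUnit_intCast_padicInt {m : ℤ} : IsUnit (m : ℤ_[p]) ↔ ¬ (p : ℤ) ∣ m := by
  rw [PadicInt.isUnit_iff, ← PadicInt.norm_int_lt_one_iff_dvd, not_lt]
  exact ⟨ge_of_eq, (PadicInt.norm_le_one _).antisymm⟩

theorem exists_binary_form_eq_unit (t c : ℤ) (h : ¬ (p : ℤ) ∣ t ^ 2 - 4 * c) {w : ℤ_[p]}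
    (hw : IsUnit w) : ∃ x y : ℤ_[p], x ^ 2 + t * x * y + c * y ^ 2 = w := by
  have hdisc : (t : ZMod p) ^ 2 - 4 * c ≠ 0 := fun h0 =>
    h ((ZMod.intCast_zmod_eq_zero_iff_dvd _ p).1 (by exact_mod_cast h0))
  have hw0 : w.toZMod ≠ 0 := (hw.map PadicInt.toZMod).ne_zero
  obtain ⟨x, y, hxy⟩ := exists_binary_form_eq (t : ZMod p) c w.toZMod hdisc
  -- The gradient of a nondegenerate form vanishes only at the origin.
  by_cases hx : 2 * x + t * y = 0
  · have hy : 2 * c * y + t * x ≠ 0 := fun hy => hw0 <| by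
      refine (mul_eq_zero.1 ?_).resolve_left hdisc
      linear_combination (-(t ^ 2 - 4 * c) : ZMod p) * hxy
        + (t * (t * x + c * y) - 2 * c * x) * hx + (t * x - 2 * (t * x + c * y)) * hy
    obtain ⟨x₀, rfl⟩ := ZMod.ringHom_surjective (PadicInt.toZMod (p := p)) x
    obtain ⟨y₀, hy₀⟩ := exists_root_of_quadratic_root_zmod (c : ℤ_[p]) (t * x₀) (x₀ ^ 2 - w) y
      (by simp only [map_intCast, map_mul, map_sub, map_pow]; linear_combination hxy)
      (by simpa using hy)
    exact ⟨x₀, y₀, by linear_combination hy₀⟩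
  · obtain ⟨y₀, rfl⟩ := ZMod.ringHom_surjective (PadicInt.toZMod (p := p)) y
    obtain ⟨x₀, hx₀⟩ := exists_root_of_quadratic_root_zmod (1 : ℤ_[p]) (t * y₀) (c * y₀ ^ 2 - w) x
      (by simp only [map_intCast, map_mul, map_sub, map_pow, map_one]; linear_combination hxy)
      (by simpa using hx)
    exact ⟨x₀, y₀, by linear_combination hx₀⟩

end BinaryForms

/-! ### The reduced norm form -/

section NormForm

open QuaternionAlgebra

variable {a b : ℚ}

theorem nrd_eq (x : ℍ[ℚ,a,b]) :
    nrd x = x.re ^ 2 - a * x.imI ^ 2 - b * x.imJ ^ 2 + a * b * x.imK ^ 2 := by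
  simp only [nrd, re_mul, re_star, imI_star, imJ_star, imK_star]
  ring

theorem qbil_eq (x y : ℍ[ℚ,a,b]) :
    qbil x y = 2 * (x.re * y.re - a * x.imI * y.imI - b * x.imJ * y.imJ
      + a * b * x.imK * y.imK) := by
  simp only [qbil, re_add, re_mul, re_star, imI_star, imJ_star, imK_star]
  ring

theorem nrd_add (x y : ℍ[ℚ,a,b]) : nrd (x + y) = nrd x + nrd y + qbil x y := by
  simp only [nrd_eq, qbil_eq, re_add, imI_add, imJ_add, imK_add]
  ring

theorem nrd_mul (x y : ℍ[ℚ,a,b]) : nrd (x * y) = nrd x * nrd y := by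
  simp only [nrd_eq, re_mul, imI_mul, imJ_mul, imK_mul]
  ring

theorem nrd_star (x : ℍ[ℚ,a,b]) : nrd (star x) = nrd x := by
  simp [nrd_eq]

theorem nrd_smul (q : ℚ) (x : ℍ[ℚ,a,b]) : nrd (q • x) = q ^ 2 * nrd x := by
  simp only [nrd_eq, re_smul, imI_smul, imJ_smul, imK_smul, smul_eq_mul]
  ring

theorem nrd_one : nrd (1 : ℍ[ℚ,a,b]) = 1 := by
  simp [nrd_eq]

theorem nrd_nonneg (ha : a < 0) (hb : b < 0) (x : ℍ[ℚ,a,b]) : 0 ≤ nrd x := by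
  have hI := mul_nonneg (neg_nonneg.2 ha.le) (sq_nonneg x.imI)
  have hJ := mul_nonneg (neg_nonneg.2 hb.le) (sq_nonneg x.imJ)
  have hK := mul_nonneg (mul_pos_of_neg_of_neg ha hb).le (sq_nonneg x.imK)
  rw [nrd_eq]
  linarith [sq_nonneg x.re]

theorem qbil_comm (x y : ℍ[ℚ,a,b]) : qbil x y = qbil y x := by
  rw [qbil_eq, qbil_eq]
  ring

theorem qbil_mul_left (z x y : ℍ[ℚ,a,b]) : qbil (z * x) y = qbil x (star z * y) := by
  simp only [qbil_eq, re_mul, imI_mul, imJ_mul, imK_mul, re_star, imI_star, imJ_star, imK_star]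
  ring

theorem qbil_mul_right (z x y : ℍ[ℚ,a,b]) : qbil (x * z) y = qbil x (y * star z) := by
  simp only [qbil_eq, re_mul, imI_mul, imJ_mul, imK_mul, re_star, imI_star, imJ_star, imK_star]
  ring

theorem mul_star_add_mul_star (x y : ℍ[ℚ,a,b]) :
    x * star y + y * star x = qbil x y • (1 : ℍ[ℚ,a,b]) := by
  ext <;> simp [qbil_eq] <;> ring

theorem star_mul_self_eq (x : ℍ[ℚ,a,b]) : star x * x = nrd x • (1 : ℍ[ℚ,a,b]) := by
  ext <;> simp [nrd_eq] <;> ring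

theorem star_eq_qbil_one_sub (x : ℍ[ℚ,a,b]) : star x = qbil x 1 • (1 : ℍ[ℚ,a,b]) - x := by
  rw [← mul_star_add_mul_star]
  simp

theorem mul_star_mul_eq (x y : ℍ[ℚ,a,b]) : x * star y * x = qbil x y • x - nrd x • y := by
  rw [eq_sub_of_add_eq (mul_star_add_mul_star x y), sub_mul, mul_assoc y, star_mul_self_eq,
    smul_mul_assoc, one_mul, mul_smul_comm, mul_one]

theorem qbil_mul_mul (z x y : ℍ[ℚ,a,b]) : qbil (x * z) (y * z) = nrd z * qbil x y := by
  simp only [qbil_eq, nrd_eq, re_mul, imI_mul, imJ_mul, imK_mul]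
  ring

/-- The bilinear form `b(x, y) = tr(x ȳ)` as a Mathlib bilinear form. -/
def qbilForm (a b : ℚ) : LinearMap.BilinForm ℚ ℍ[ℚ,a,b] :=
  LinearMap.mk₂ ℚ qbil
    (fun x y z => by simp only [qbil_eq, re_add, imI_add, imJ_add, imK_add]; ring)
    (fun c x y => by simp only [qbil_eq, re_smul, imI_smul, imJ_smul, imK_smul, smul_eq_mul]; ring)
    (fun x y z => by simp only [qbil_eq, re_add, imI_add, imJ_add, imK_add]; ring)
    (fun c x y => by simp only [qbil_eq, re_smul, imI_smul, imJ_smul, imK_smul, smul_eq_mul]; ring)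

theorem qbilForm_apply (x y : ℍ[ℚ,a,b]) : qbilForm a b x y = qbil x y := rfl

theorem qbilForm_isSymm : (qbilForm a b).IsSymm := ⟨qbil_comm⟩

theorem qbilForm_nondegenerate (ha : a ≠ 0) (hb : b ≠ 0) : (qbilForm a b).Nondegenerate := by
  refine qbilForm_isSymm.isRefl.nondegenerate_iff_separatingLeft.2 fun x hx => ?_
  simp only [qbilForm_apply, qbil_eq] at hx
  ext
  · simpa using hx ⟨1, 0, 0, 0⟩
  · simpa [ha] using hx ⟨0, 1, 0, 0⟩
  · simpa [hb] using hx ⟨0, 0, 1, 0⟩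
  · simpa [ha, hb] using hx ⟨0, 0, 0, 1⟩

theorem qbil_smul_left (q : ℚ) (x y : ℍ[ℚ,a,b]) : qbil (q • x) y = q * qbil x y := by
  simp [← qbilForm_apply]

theorem mul_qbil_mem_intSubring {M : Submodule ℤ ℍ[ℚ,a,b]} {q : ℚ}
    (h : ∀ x ∈ M, q * nrd x ∈ intSubring) {x y : ℍ[ℚ,a,b]} (hx : x ∈ M) (hy : y ∈ M) :
    q * qbil x y ∈ intSubring := by
  have hpolar : q * qbil x y = q * nrd (x + y) - q * nrd x - q * nrd y := by
    rw [nrd_add]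
    ring
  exact hpolar ▸ sub_mem (sub_mem (h _ (add_mem hx hy)) (h x hx)) (h y hy)

end NormForm

/-! ### Ramification at infinity -/

section Ramification

variable {a b : ℚ}

theorem neg_of_mul_self_eq_coe (h : RamifiedAtInfinity a b) {x : ℍ[ℝ,(a : ℝ),(b : ℝ)]} {c : ℝ}
    (hx : x * x = c) (hxc : ∀ r : ℝ, x ≠ r) : c < 0 := by
  by_contra! hc
  have hfactor : (x - (√c : ℝ)) * (x + (√c : ℝ)) = 0 := by
    have hcomm := QuaternionAlgebra.coe_commutes (√c) x
    rw [mul_add, sub_mul, sub_mul, hx, ← hcomm, ← QuaternionAlgebra.coe_mul, Real.mul_self_sqrt hc]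
    abel
  have hunit : IsUnit (x - (√c : ℝ)) := h _ (sub_ne_zero.2 (hxc _))
  refine hxc (-√c) ?_
  rw [QuaternionAlgebra.coe_neg]
  exact eq_neg_of_add_eq_zero_left (hunit.mul_right_eq_zero.1 hfactor)

theorem neg_of_ramifiedAtInfinity (h : RamifiedAtInfinity a b) : a < 0 ∧ b < 0 := by
  constructor
  · refine mod_cast neg_of_mul_self_eq_coe h (x := ⟨0, 1, 0, 0⟩) (c := a) ?_ fun r hr => ?_
    · ext <;> simp
    · simpa using congrArg QuaternionAlgebra.imI hr
  · refine mod_cast neg_of_mul_self_eq_coe h (x := ⟨0, 0, 1, 0⟩) (c := b) ?_ fun r hr => ?_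
    · ext <;> simp
    · simpa using congrArg QuaternionAlgebra.imJ hr

end Ramification

/-! ### Gram matrices -/

section Gram

variable {a b : ℚ} {ι κ μ : Type*}

/-- The matrix of the values `b(v i, w j)`. -/
def gram (v : ι → ℍ[ℚ,a,b]) (w : κ → ℍ[ℚ,a,b]) : Matrix ι κ ℚ :=
  Matrix.of fun i j => qbil (v i) (w j)

theorem gram_transpose (v : ι → ℍ[ℚ,a,b]) (w : κ → ℍ[ℚ,a,b]) : (gram v w)ᵀ = gram w v := by
  ext i j
  exact qbil_comm _ _

theorem gram_mul_right (v : ι → ℍ[ℚ,a,b]) (w : κ → ℍ[ℚ,a,b]) (z : ℍ[ℚ,a,b]) :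
    gram (fun i => v i * z) (fun j => w j * z) = nrd z • gram v w := by
  ext i j
  exact qbil_mul_mul _ _ _

theorem gram_comb_left [Fintype κ] {v : κ → ℍ[ℚ,a,b]} {w : ι → ℍ[ℚ,a,b]} {X : Matrix ι κ ℚ}
    (h : ∀ i, w i = ∑ j, X i j • v j) (u : μ → ℍ[ℚ,a,b]) : gram w u = X * gram v u := by
  ext i k
  simp [gram, Matrix.mul_apply, ← qbilForm_apply, h]

theorem gram_comb_comb [Fintype κ] {v : κ → ℍ[ℚ,a,b]} {w : ι → ℍ[ℚ,a,b]} {X : Matrix ι κ ℚ}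
    (h : ∀ i, w i = ∑ j, X i j • v j) : gram w w = X * gram v v * Xᵀ := by
  rw [gram_comb_left h, ← gram_transpose, gram_comb_left h, Matrix.transpose_mul, gram_transpose,
    Matrix.mul_assoc]

theorem exists_basis_of_linearIndependent {v : Fin 4 → ℍ[ℚ,a,b]} (hv : LinearIndependent ℚ v) :
    ∃ e : Module.Basis (Fin 4) ℚ ℍ[ℚ,a,b], ⇑e = v :=
  ⟨basisOfLinearIndependentOfCardEqFinrank hv (by simp [QuaternionAlgebra.finrank_eq_four]),
    coe_basisOfLinearIndependentOfCardEqFinrank _ _⟩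

theorem exists_comb_of_linearIndependent {v : Fin 4 → ℍ[ℚ,a,b]} (hv : LinearIndependent ℚ v)
    (w : ι → ℍ[ℚ,a,b]) : ∃ X : Matrix ι (Fin 4) ℚ, ∀ i, w i = ∑ j, X i j • v j := by
  obtain ⟨e, rfl⟩ := exists_basis_of_linearIndependent hv
  exact ⟨Matrix.of fun i j => e.repr (w i) j, fun i => (e.sum_repr (w i)).symm⟩

/-- `v` is a `ℤ`-basis of the full lattice `I`, with integral Gram matrix `A`. -/
structure IsGramBasis (I : Submodule ℤ ℍ[ℚ,a,b]) (v : Fin 4 → ℍ[ℚ,a,b])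
    (A : Matrix (Fin 4) (Fin 4) ℤ) : Prop where
  linearIndependent : LinearIndependent ℚ v
  span_eq : Submodule.span ℤ (Set.range v) = I
  gram_eq : gram v v = A.map (Int.cast : ℤ → ℚ)

variable {I : Submodule ℤ ℍ[ℚ,a,b]} {v : Fin 4 → ℍ[ℚ,a,b]} {A : Matrix (Fin 4) (Fin 4) ℤ}

theorem isGramOf_iff_exists_isGramBasis :
    IsGramOf (I : Set ℍ[ℚ,a,b]) A ↔ ∃ v, IsGramBasis I v A := by
  simp only [IsGramOf, Submodule.span_eq]
  refine exists_congr fun v =>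
    ⟨fun ⟨hli, hspan, hA⟩ => ⟨hli, hspan, ?_⟩, fun h => ⟨h.linearIndependent, h.span_eq, ?_⟩⟩
  · ext i j
    exact (hA i j).symm
  · exact fun i j => (congrFun₂ h.gram_eq i j).symm

theorem exists_isGramBasis (hI : IsLattice 4 I)
    (hint : ∀ x ∈ I, ∀ y ∈ I, qbil x y ∈ intSubring) : ∃ v A, IsGramBasis I v A := by
  obtain ⟨v, hli, rfl⟩ := hI
  have hv (i : Fin 4) : v i ∈ Submodule.span ℤ (Set.range v) := Submodule.subset_span ⟨i, rfl⟩
  choose A hA using fun i j => mem_intSubring.1 (hint (v i) (hv i) (v j) (hv j))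
  exact ⟨v, Matrix.of A, hli, rfl, by ext i j; exact hA i j⟩

namespace IsGramBasis

theorem apply_mem (h : IsGramBasis I v A) (i : Fin 4) : v i ∈ I :=
  h.span_eq ▸ Submodule.subset_span ⟨i, rfl⟩

theorem exists_int_comb (h : IsGramBasis I v A) {w : ι → ℍ[ℚ,a,b]} (hw : ∀ i, w i ∈ I) :
    ∃ C : Matrix ι (Fin 4) ℤ, ∀ i, w i = ∑ j, C.map (Int.cast : ℤ → ℚ) i j • v j := by
  have hspan (i : ι) : ∃ c : Fin 4 → ℤ, ∑ j, c j • v j = w i :=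
    (Submodule.mem_span_range_iff_exists_fun ℤ).1 (h.span_eq ▸ hw i)
  choose C hC using hspan
  exact ⟨Matrix.of C, fun i => by
    simp only [← hC, Matrix.map_apply, Matrix.of_apply, Int.cast_smul_eq_zsmul]⟩

theorem exists_comb_mul_right {R : Submodule ℤ ℍ[ℚ,a,b]} {e : Fin 4 → ℍ[ℚ,a,b]}
    {G : Matrix (Fin 4) (Fin 4) ℤ} (hv : IsGramBasis I v A) (he : IsGramBasis R e G)
    {x : ℍ[ℚ,a,b]} {m : ℤ} (hm : nrd x = m) (hx : ∀ r ∈ R, r * x ∈ I) :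
    ∃ C : Matrix (Fin 4) (Fin 4) ℤ,
      (∀ i, e i * x = ∑ j, C.map (Int.cast : ℤ → ℚ) i j • v j) ∧ C * A * Cᵀ = m • G := by
  obtain ⟨C, hC⟩ := hv.exists_int_comb fun i => hx (e i) (he.apply_mem i)
  refine ⟨C, hC, Matrix.map_injective (Int.cast_injective (α := ℚ)) ?_⟩
  have hgram := gram_comb_comb hC
  rw [gram_mul_right, hm, he.gram_eq, hv.gram_eq] at hgram
  simp only [Matrix.map_mul_intCast, ← Matrix.transpose_map] at hgram ⊢
  rw [← hgram]
  ext i j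
  exact (Int.cast_mul _ _).symm

end IsGramBasis

end Gram

/-! ### Dual lattices -/

section Dual

variable {a b : ℚ} {I : Submodule ℤ ℍ[ℚ,a,b]}

/-- The dual lattice `I^#` as a `ℤ`-submodule. -/
def dual (I : Submodule ℤ ℍ[ℚ,a,b]) : Submodule ℤ ℍ[ℚ,a,b] := (qbilForm a b).dualSubmodule I

theorem mem_dual {x : ℍ[ℚ,a,b]} : x ∈ dual I ↔ ∀ y ∈ I, qbil x y ∈ intSubring := by
  simp [dual, LinearMap.BilinForm.mem_dualSubmodule, Submodule.mem_one, Subring.mem_bot,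
    qbilForm_apply]

theorem coe_dual : (dual I : Set ℍ[ℚ,a,b]) = dualLattice I := by
  ext x
  simp only [SetLike.mem_coe, mem_dual, mem_intSubring, dualLattice, Set.mem_ofPred_eq]

theorem dual_dual (ha : a ≠ 0) (hb : b ≠ 0) (hI : IsLattice 4 I) : dual (dual I) = I := by
  obtain ⟨v, hv, rfl⟩ := hI
  obtain ⟨e, rfl⟩ := exists_basis_of_linearIndependent hv
  exact LinearMap.BilinForm.dualSubmodule_dualSubmodule_of_basis _ (qbilForm_nondegenerate ha hb)
    qbilForm_isSymm e

theorem nsmul_mem_of_mem_dual (ha : a ≠ 0) (hb : b ≠ 0) (hI : IsLattice 4 I) {k : ℕ}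
    (h : ∀ y ∈ dual I, k * nrd y ∈ intSubring) {y : ℍ[ℚ,a,b]} (hy : y ∈ dual I) : k • y ∈ I := by
  rw [← dual_dual ha hb hI, mem_dual]
  intro z hz
  rw [← Nat.cast_smul_eq_nsmul ℚ, qbil_smul_left]
  exact mul_qbil_mem_intSubring h hy hz

theorem IsGramBasis.det_dvd_pow_of_nsmul_dual_le (ha : a ≠ 0) (hb : b ≠ 0)
    {v : Fin 4 → ℍ[ℚ,a,b]} {A : Matrix (Fin 4) (Fin 4) ℤ} (hv : IsGramBasis I v A) {k : ℕ}
    (h : ∀ y ∈ dual I, k • y ∈ I) : A.det ∣ (k : ℤ) ^ 4 := by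
  obtain ⟨e, he⟩ := exists_basis_of_linearIndependent hv.linearIndependent
  let w := (qbilForm a b).dualBasis (qbilForm_nondegenerate ha hb) e
  have hw (i : Fin 4) : w i ∈ dual I := by
    rw [dual, ← hv.span_eq, ← he,
      LinearMap.BilinForm.dualSubmodule_span_of_basis _ (qbilForm_nondegenerate ha hb)]
    exact Submodule.subset_span ⟨i, rfl⟩
  obtain ⟨X, hX⟩ := hv.exists_int_comb fun i => h (w i) (hw i)
  have hgram : gram (fun i => k • w i) v = (k : ℚ) • 1 := by
    ext i j
    rw [gram, Matrix.of_apply, ← Nat.cast_smul_eq_nsmul ℚ, qbil_smul_left, ← qbilForm_apply, ← he,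
      LinearMap.BilinForm.apply_dualBasis_left, Matrix.smul_apply, Matrix.one_apply, smul_eq_mul]
    simp only [eq_comm]
  have hdet := congrArg Matrix.det hgram
  rw [gram_comb_left hX, hv.gram_eq, Matrix.det_mul, ← Int.cast_det, ← Int.cast_det,
    Matrix.det_smul, Matrix.det_one, mul_one, Fintype.card_fin] at hdet
  exact ⟨X.det, by rw [mul_comm]; exact_mod_cast hdet.symm⟩

end Dual

/-! ### Positive definiteness -/

section PosDef

variable {a b : ℚ}

theorem gram_basisOneIJK :
    gram (QuaternionAlgebra.basisOneIJK a 0 b) (QuaternionAlgebra.basisOneIJK a 0 b) =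
      Matrix.diagonal ![2, -2 * a, -2 * b, 2 * a * b] := by
  ext i j
  fin_cases i <;> fin_cases j <;> simp [gram, qbil_eq, QuaternionAlgebra.basisOneIJK, mul_assoc]

theorem posDef_gram_basisOneIJK (ha : a < 0) (hb : b < 0) :
    ((gram (QuaternionAlgebra.basisOneIJK a 0 b) (QuaternionAlgebra.basisOneIJK a 0 b)).map
      (Rat.castHom ℝ)).PosDef := by
  have hpos : ∀ i, 0 < ![2, -2 * a, -2 * b, 2 * a * b] i := by
    have hab := mul_pos_of_neg_of_neg ha hb
    intro i
    fin_cases i <;> simp <;> linarith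
  rw [gram_basisOneIJK, Matrix.diagonal_map (map_zero _), Matrix.posDef_diagonal_iff]
  exact fun i => Rat.cast_pos.2 (hpos i)

theorem posDef_gram (ha : a < 0) (hb : b < 0) (e : Module.Basis (Fin 4) ℚ ℍ[ℚ,a,b]) :
    ((gram e e).map (Rat.castHom ℝ)).PosDef := by
  let std := QuaternionAlgebra.basisOneIJK a 0 b
  let X : Matrix (Fin 4) (Fin 4) ℚ := (std.toMatrix e)ᵀ
  have hX : ∀ i, e i = ∑ j, X i j • std j := fun i => (std.sum_toMatrix_smul_self e i).symm
  have hunit : IsUnit (X.map (Rat.castHom ℝ)) := by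
    have hstd : IsUnit (std.toMatrix e) := @isUnit_of_invertible _ _ _ (std.invertibleToMatrix e)
    exact (Matrix.isUnit_transpose _ |>.2 hstd).map (Rat.castHom ℝ).mapMatrix
  have hconj :=
    (Matrix.IsUnit.posDef_star_right_conjugate_iff hunit).2 (posDef_gram_basisOneIJK ha hb)
  rw [Matrix.star_eq_conjTranspose, Matrix.conjTranspose_eq_transpose_of_trivial] at hconj
  rwa [gram_comb_comb hX, Matrix.map_mul, Matrix.map_mul, Matrix.transpose_map]

theorem IsGramBasis.posDefMat {I : Submodule ℤ ℍ[ℚ,a,b]} {v : Fin 4 → ℍ[ℚ,a,b]}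
    {A : Matrix (Fin 4) (Fin 4) ℤ} (hv : IsGramBasis I v A) (ha : a < 0) (hb : b < 0) :
    PosDefMat A := by
  obtain ⟨e, rfl⟩ := exists_basis_of_linearIndependent hv.linearIndependent
  have hpos := posDef_gram ha hb e
  rw [hv.gram_eq, Matrix.map_map] at hpos
  have hcast : Rat.castHom ℝ ∘ (Int.cast : ℤ → ℚ) = Int.cast := funext (map_intCast _)
  rwa [hcast] at hpos

end PosDef

/-! ### Similitudes of Gram matrices -/

section Similitude

variable {n K : Type*} [Fintype n] [CommRing K]

theorem map_intCast_mul_mul_transpose {X A B : Matrix n n ℤ} {m : ℤ} (h : X * A * Xᵀ = m • B) :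
    X.map (Int.cast : ℤ → K) * A.map Int.cast * (X.map Int.cast)ᵀ = (m : K) • B.map Int.cast := by
  rw [← Matrix.map_smul' _ _ _ Int.cast_mul, ← h]
  simp only [Matrix.map_mul_intCast, ← Matrix.transpose_map]

variable [DecidableEq n]

theorem det_sq_mul_det_eq_of_mul_mul_transpose_eq_smul {X A B : Matrix n n K} {c : K}
    (h : X * A * Xᵀ = c • B) : X.det ^ 2 * A.det = c ^ Fintype.card n * B.det := by
  rw [← Matrix.det_smul, ← h, Matrix.det_mul, Matrix.det_mul, Matrix.det_transpose]
  ring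

theorem det_sq_eq_of_mul_mul_transpose_eq_smul [IsDomain K] {X G : Matrix n n K} {c : K}
    (hG : G.det ≠ 0) (h : X * G * Xᵀ = c • G) : X.det ^ 2 = c ^ Fintype.card n :=
  mul_right_cancel₀ hG (det_sq_mul_det_eq_of_mul_mul_transpose_eq_smul h)

theorem smul_one_add_smul_mul_mul_transpose {T G : Matrix n n K} {t c : K}
    (hnorm : T * G * Tᵀ = c • G) (htrace : T * G + G * Tᵀ = t • G) (x y : K) :
    (x • 1 + y • T) * G * (x • 1 + y • T)ᵀ = (x ^ 2 + t * x * y + c * y ^ 2) • G := by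
  calc (x • 1 + y • T) * G * (x • 1 + y • T)ᵀ
      = x ^ 2 • G + (x * y) • (T * G + G * Tᵀ) + y ^ 2 • (T * G * Tᵀ) := by
        simp only [Matrix.transpose_add, Matrix.transpose_smul, Matrix.transpose_one, add_mul,
          mul_add, Matrix.smul_mul, Matrix.mul_smul, Matrix.one_mul, Matrix.mul_one, smul_add,
          smul_smul]
        module
    _ = (x ^ 2 + t * x * y + c * y ^ 2) • G := by
        rw [hnorm, htrace]
        module

theorem exists_transpose_mul_mul_eq_of_similitudes {A A' G C C' U : Matrix n n K} {m w : K}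
    (hC : C * A * Cᵀ = m • G) (hC' : C' * A' * C'ᵀ = (m * w) • G) (hU : U * G * Uᵀ = w • G)
    (hCdet : IsUnit C.det) (hCdet' : IsUnit C'.det) (hUdet : IsUnit U.det) :
    ∃ V : Matrix n n K, IsUnit V.det ∧ Vᵀ * A * V = A' := by
  have hUC : U * C * A * (U * C)ᵀ = C' * A' * C'ᵀ := by
    calc U * C * A * (U * C)ᵀ = U * (C * A * Cᵀ) * Uᵀ := by
          simp only [Matrix.transpose_mul, Matrix.mul_assoc]
      _ = C' * A' * C'ᵀ := by
          rw [hC, hC', Matrix.mul_smul, Matrix.smul_mul, hU, smul_smul]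
  refine ⟨(C'⁻¹ * (U * C))ᵀ, ?_, ?_⟩
  · rw [Matrix.det_transpose, Matrix.det_mul, Matrix.det_mul]
    exact (Matrix.isUnit_nonsing_inv_det _ hCdet').mul (hUdet.mul hCdet)
  · calc (C'⁻¹ * (U * C))ᵀᵀ * A * (C'⁻¹ * (U * C))ᵀ
        = C'⁻¹ * (U * C * A * (U * C)ᵀ) * C'⁻¹ᵀ := by
          simp only [Matrix.transpose_transpose, Matrix.transpose_mul, Matrix.mul_assoc]
      _ = C'⁻¹ * C' * A' * (C'⁻¹ * C')ᵀ := by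
          rw [hUC]
          simp only [Matrix.transpose_mul, Matrix.mul_assoc]
      _ = A' := by
          rw [Matrix.nonsing_inv_mul _ hCdet', Matrix.transpose_one, Matrix.one_mul, Matrix.mul_one]

end Similitude

/-! ### Orders of squarefree reduced discriminant -/

section Order

/-- `R` is an order of squarefree reduced discriminant `N`, that is, a hereditary order. -/
structure IsHereditaryOrder {a b : ℚ} (R : Submodule ℤ ℍ[ℚ,a,b]) (N : ℕ) : Prop where
  isOrder : IsOrder R
  hasReducedDiscriminant : HasReducedDiscriminant R N
  squarefree : Squarefree N

theorem not_pow_three_dvd_sq_of_squarefree {p N : ℕ} (hp : p.Prime) (hN : Squarefree N) :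
    ¬ (p : ℤ) ^ 3 ∣ (N : ℤ) ^ 2 := by
  intro h
  replace h : p ^ 3 ∣ N ^ 2 := mod_cast h
  obtain ⟨k, rfl⟩ : p ∣ N := hp.dvd_of_dvd_pow ((dvd_pow_self p three_ne_zero).trans h)
  rw [pow_succ, mul_pow, Nat.mul_dvd_mul_iff_left (pow_pos hp.pos 2)] at h
  exact hp.one_lt.ne' (Nat.isUnit_iff.1 (hN p (mul_dvd_mul_left p (hp.dvd_of_dvd_pow h))))

theorem pow_three_dvd_det_of_dvd_polarized_disc {G : Matrix (Fin 4) (Fin 4) ℤ} {p : ℕ}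
    (hp : p.Prime) (hp2 : p ≠ 2) (t : Fin 4 → ℤ)
    (h : ∀ i j, (p : ℤ) ∣ 2 * (t i * t j) - 4 * G i j) : (p : ℤ) ^ 3 ∣ G.det := by
  have hcop : IsCoprime (p : ℤ) 2 :=
    Nat.isCoprime_iff_coprime.2 ((Nat.coprime_primes hp Nat.prime_two).2 hp2)
  have hdvd (i j : Fin 4) : (p : ℤ) ∣ t i * t j - 2 * G i j :=
    hcop.dvd_of_dvd_mul_left <|
      (show 2 * (t i * t j) - 4 * G i j = 2 * (t i * t j - 2 * G i j) by ring) ▸ h i j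
  choose M hM using hdvd
  have hG : (2 : ℤ) • G = Matrix.vecMulVec t t + (p : ℤ) • -Matrix.of M := by
    ext i j
    simp only [Matrix.smul_apply, Matrix.add_apply, Matrix.vecMulVec_apply, Matrix.neg_apply,
      Matrix.of_apply, smul_eq_mul]
    linear_combination -hM i j
  have hdet := pow_card_dvd_mul_det_vecMulVec_add (p : ℤ) t t (-Matrix.of M)
  rw [← hG, Matrix.det_smul, Fintype.card_fin, pow_succ',
    mul_dvd_mul_iff_left (Nat.cast_ne_zero.2 hp.ne_zero)] at hdet
  exact (hcop.pow (m := 3) (n := 4)).dvd_of_dvd_mul_left hdet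

theorem pow_card_dvd_det_of_forall_dvd {n K : Type*} [Fintype n] [DecidableEq n] [CommRing K]
    {G : Matrix n n K} {d : K} (h : ∀ i j, d ∣ G i j) : d ^ Fintype.card n ∣ G.det := by
  choose M hM using h
  have hG : G = d • Matrix.of M := by
    ext i j
    exact hM i j
  exact ⟨_, hG ▸ Matrix.det_smul _ _⟩

variable {a b : ℚ} {R : Submodule ℤ ℍ[ℚ,a,b]} {N : ℕ}

theorem gram_mul_right_add_gram_mul_right {ι κ : Type*} (v : ι → ℍ[ℚ,a,b])
    (w : κ → ℍ[ℚ,a,b]) (z : ℍ[ℚ,a,b]) :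
    gram (fun i => v i * z) w + gram v (fun j => w j * z) = qbil z 1 • gram v w := by
  ext i j
  simp only [gram, Matrix.add_apply, Matrix.of_apply, Matrix.smul_apply, smul_eq_mul]
  rw [qbil_mul_right, star_eq_qbil_one_sub, mul_sub, mul_smul_comm, mul_one, ← qbilForm_apply,
    map_sub, map_smul, qbilForm_apply, qbilForm_apply, smul_eq_mul, sub_add_cancel]

namespace IsHereditaryOrder

theorem exists_isGramBasis (hR : IsHereditaryOrder R N) :
    ∃ e G, IsGramBasis R e G ∧ G.det = (N : ℤ) ^ 2 := by
  obtain ⟨G, hG, hdet⟩ := hR.hasReducedDiscriminant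
  obtain ⟨e, he⟩ := isGramOf_iff_exists_isGramBasis.1 hG
  exact ⟨e, G, he, hdet⟩

theorem one_mem (hR : IsHereditaryOrder R N) : 1 ∈ R := hR.isOrder.2.1

theorem mul_mem (hR : IsHereditaryOrder R N) {x y : ℍ[ℚ,a,b]} (hx : x ∈ R) (hy : y ∈ R) :
    x * y ∈ R := hR.isOrder.2.2 x hx y hy

theorem det_map_ne_zero (hR : IsHereditaryOrder R N) {K : Type*} [CommRing K] [CharZero K]
    [NoZeroDivisors K] {G : Matrix (Fin 4) (Fin 4) ℤ} (hG : G.det = (N : ℤ) ^ 2) :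
    (G.map (Int.cast : ℤ → K)).det ≠ 0 := by
  rw [← Int.cast_det, hG]
  exact_mod_cast pow_ne_zero 2 hR.squarefree.ne_zero

theorem nrd_mem_intSubring (hR : IsHereditaryOrder R N) {x : ℍ[ℚ,a,b]} (hx : x ∈ R) :
    nrd x ∈ intSubring := by
  obtain ⟨e, G, he, hdet⟩ := hR.exists_isGramBasis
  obtain ⟨C, hC⟩ := he.exists_int_comb fun i => hR.mul_mem (he.apply_mem i) hx
  have hgram := gram_comb_comb hC
  rw [gram_mul_right, he.gram_eq] at hgram
  have hpow := det_sq_eq_of_mul_mul_transpose_eq_smul (hR.det_map_ne_zero hdet) hgram.symm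
  refine mem_intSubring_of_pow_mem (Fintype.card_pos (α := Fin 4)) (hpow ▸ pow_mem ?_ 2)
  rw [← Int.cast_det]
  exact intCast_mem _ _

theorem qbil_mem_intSubring (hR : IsHereditaryOrder R N) {x y : ℍ[ℚ,a,b]} (hx : x ∈ R)
    (hy : y ∈ R) : qbil x y ∈ intSubring := by
  rw [← one_mul (qbil x y)]
  exact mul_qbil_mem_intSubring
    (fun z hz => (one_mul (nrd z)).symm ▸ hR.nrd_mem_intSubring hz) hx hy

theorem star_mem (hR : IsHereditaryOrder R N) {x : ℍ[ℚ,a,b]} (hx : x ∈ R) : star x ∈ R := by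
  obtain ⟨t, ht⟩ := mem_intSubring.1 (hR.qbil_mem_intSubring hx hR.one_mem)
  rw [star_eq_qbil_one_sub, ht, Int.cast_smul_eq_zsmul]
  exact sub_mem (R.smul_mem t hR.one_mem) hx

theorem mul_nrd_mem_intSubring_of_mem_dual (hR : IsHereditaryOrder R N) {z : ℍ[ℚ,a,b]}
    (hz : z ∈ dual R) : N * nrd z ∈ intSubring := by
  obtain ⟨e, G, he, hdet⟩ := hR.exists_isGramBasis
  obtain ⟨X, hX⟩ := exists_comb_of_linearIndependent he.linearIndependent fun i => e i * z
  have hgram := gram_comb_comb hX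
  rw [gram_mul_right, he.gram_eq] at hgram
  have hpow := det_sq_eq_of_mul_mul_transpose_eq_smul (hR.det_map_ne_zero hdet) hgram.symm
  have hint (i j : Fin 4) : gram (fun i => e i * z) e i j ∈ intSubring := by
    rw [gram, Matrix.of_apply, qbil_mul_left]
    exact mem_dual.1 hz _ (hR.mul_mem (hR.star_mem (he.apply_mem i)) (he.apply_mem j))
  have hdet_mem : (gram (fun i => e i * z) e).det ∈ intSubring := by
    choose M hM using fun i j => mem_intSubring.1 (hint i j)
    rw [show gram (fun i => e i * z) e = (Matrix.of M).map Int.cast from Matrix.ext hM,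
      ← Int.cast_det]
    exact intCast_mem _ _
  have hdet_eq : (N * nrd z) ^ 4 = (gram (fun i => e i * z) e).det ^ 2 := by
    rw [gram_comb_left hX, he.gram_eq, Matrix.det_mul, mul_pow, mul_pow, hpow, ← Int.cast_det, hdet]
    push_cast [Fintype.card_fin]
    ring
  exact mem_intSubring_of_pow_mem four_pos (hdet_eq ▸ pow_mem hdet_mem 2)

theorem exists_not_dvd_disc (hR : IsHereditaryOrder R N) {p : ℕ} (hp : p.Prime) :
    ∃ r ∈ R, ∃ t c : ℤ, qbil r 1 = t ∧ nrd r = c ∧ ¬ (p : ℤ) ∣ t ^ 2 - 4 * c := by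
  by_contra! h
  obtain ⟨e, G, he, hdet⟩ := hR.exists_isGramBasis
  refine not_pow_three_dvd_sq_of_squarefree hp hR.squarefree (hdet ▸ ?_)
  choose t ht using fun i => mem_intSubring.1 (hR.qbil_mem_intSubring (he.apply_mem i) hR.one_mem)
  choose c hc using fun i => mem_intSubring.1 (hR.nrd_mem_intSubring (he.apply_mem i))
  have hG (i j : Fin 4) : qbil (e i) (e j) = G i j := congrFun₂ he.gram_eq i j
  rcases eq_or_ne p 2 with rfl | hp2
  · have heven (i j : Fin 4) : 2 ∣ G i j := by
      have hmem := hR.mul_mem (he.apply_mem i) (hR.star_mem (he.apply_mem j))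
      obtain ⟨m, hm⟩ := mem_intSubring.1 (hR.nrd_mem_intSubring hmem)
      have htrace : qbil (e i * star (e j)) 1 = G i j := by
        rw [qbil_mul_right, star_star, one_mul, hG]
      have hsq : (2 : ℤ) ∣ G i j ^ 2 :=
        (dvd_sub_left ⟨2 * m, by ring⟩).1 (h _ hmem _ _ htrace hm)
      exact Int.prime_two.dvd_of_dvd_pow hsq
    exact (pow_dvd_pow 2 (Nat.le_succ 3)).trans (pow_card_dvd_det_of_forall_dvd heven)
  · refine pow_three_dvd_det_of_dvd_polarized_disc hp hp2 t fun i j => ?_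
    have hsum := h (e i + e j) (add_mem (he.apply_mem i) (he.apply_mem j)) (t i + t j)
      (c i + c j + G i j) (by simp [← qbilForm_apply, ← ht])
      (by rw [nrd_add, hc, hc, hG]; push_cast; rfl)
    have hi := h _ (he.apply_mem i) _ _ (ht i) (hc i)
    have hj := h _ (he.apply_mem j) _ _ (ht j) (hc j)
    have hpolar : 2 * (t i * t j) - 4 * G i j = (t i + t j) ^ 2 - 4 * (c i + c j + G i j)
        - (t i ^ 2 - 4 * c i) - (t j ^ 2 - 4 * c j) := by ring
    exact hpolar ▸ dvd_sub (dvd_sub hsum hi) hj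

theorem exists_similitude (hR : IsHereditaryOrder R N) {e : Fin 4 → ℍ[ℚ,a,b]}
    {G : Matrix (Fin 4) (Fin 4) ℤ} (he : IsGramBasis R e G) {r : ℍ[ℚ,a,b]} (hr : r ∈ R)
    {t c : ℤ} (ht : qbil r 1 = t) (hc : nrd r = c) :
    ∃ T : Matrix (Fin 4) (Fin 4) ℤ, T * G * Tᵀ = c • G ∧ T * G + G * Tᵀ = t • G := by
  obtain ⟨T, hT, hnorm⟩ := he.exists_comb_mul_right he hc fun x hx => hR.mul_mem hx hr
  refine ⟨T, hnorm, Matrix.map_injective (Int.cast_injective (α := ℚ)) ?_⟩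
  have htrace := gram_mul_right_add_gram_mul_right e e r
  rw [← gram_transpose (fun j => e j * r), gram_comb_left hT, Matrix.transpose_mul, gram_transpose,
    he.gram_eq, ht] at htrace
  change (T * G + G * Tᵀ).map Int.cast = (t • G).map Int.cast
  rw [Matrix.map_add _ Int.cast_add, Matrix.map_smul' _ _ _ Int.cast_mul, ← htrace]
  simp only [Matrix.map_mul_intCast, Matrix.transpose_map]

theorem exists_padic_similitude (hR : IsHereditaryOrder R N) {e : Fin 4 → ℍ[ℚ,a,b]}
    {G : Matrix (Fin 4) (Fin 4) ℤ} (he : IsGramBasis R e G) (hG : G.det = (N : ℤ) ^ 2) {p : ℕ}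
    [hp : Fact p.Prime] {w : ℤ_[p]} (hw : IsUnit w) :
    ∃ U : Matrix (Fin 4) (Fin 4) ℤ_[p], IsUnit U.det ∧
      U * G.map Int.cast * Uᵀ = w • G.map Int.cast := by
  obtain ⟨r, hr, t, c, ht, hc, hdisc⟩ := hR.exists_not_dvd_disc hp.out
  obtain ⟨T, hnorm, htrace⟩ := hR.exists_similitude he hr ht hc
  obtain ⟨x, y, rfl⟩ := exists_binary_form_eq_unit t c hdisc hw
  have htrace' : T.map (Int.cast : ℤ → ℤ_[p]) * G.map Int.cast
      + G.map Int.cast * (T.map Int.cast)ᵀ = (t : ℤ_[p]) • G.map Int.cast := by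
    rw [← Matrix.map_smul' _ _ _ Int.cast_mul, ← htrace, Matrix.map_add _ Int.cast_add]
    simp only [Matrix.map_mul_intCast, Matrix.transpose_map]
  have hU := smul_one_add_smul_mul_mul_transpose (map_intCast_mul_mul_transpose hnorm) htrace' x y
  refine ⟨_, (isUnit_pow_iff two_ne_zero).1 ?_, hU⟩
  rw [det_sq_eq_of_mul_mul_transpose_eq_smul (hR.det_map_ne_zero hG) hU]
  exact hw.pow _

end IsHereditaryOrder

end Order

/-! ### Normalized left ideals -/

section Ideal

/-- `I` is a lattice with left order `R` on which the reduced norm is integral and takes coprime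
values: a left `R`-ideal of reduced norm `ℤ`, such as the `I_ij`. -/
structure IsNormalizedLeftIdeal {a b : ℚ} (R I : Submodule ℤ ℍ[ℚ,a,b]) : Prop where
  isLattice : IsLattice 4 I
  leftOrderSet_eq : leftOrderSet (I : Set ℍ[ℚ,a,b]) = (R : Set ℍ[ℚ,a,b])
  nrd_mem_intSubring : ∀ x ∈ I, nrd x ∈ intSubring
  one_mem_span_nrd : (1 : ℚ) ∈ Submodule.span ℤ (nrd '' (I : Set ℍ[ℚ,a,b]))

variable {a b : ℚ} {R I : Submodule ℤ ℍ[ℚ,a,b]} {N : ℕ} {x y r : ℍ[ℚ,a,b]}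
  {e v : Fin 4 → ℍ[ℚ,a,b]} {G A : Matrix (Fin 4) (Fin 4) ℤ}

theorem linearCombination_mul_eq_linearCombination_vecMul {ι κ : Type*} [Fintype ι] [Fintype κ]
    {e : ι → ℍ[ℚ,a,b]} {v : κ → ℍ[ℚ,a,b]} {C : Matrix ι κ ℤ}
    (hC : ∀ i, e i * x = ∑ j, C.map (Int.cast : ℤ → ℚ) i j • v j) (c : ι → ℤ) :
    Fintype.linearCombination ℤ e c * x = Fintype.linearCombination ℤ v (c ᵥ* C) := by
  simp only [Fintype.linearCombination_apply, Finset.sum_mul, smul_mul_assoc, hC, Finset.smul_sum,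
    Matrix.map_apply, Int.cast_smul_eq_zsmul, Matrix.vecMul, dotProduct, Finset.sum_smul, mul_smul]
  exact Finset.sum_comm

namespace IsGramBasis

theorem mem_iff (hv : IsGramBasis I v A) {z : ℍ[ℚ,a,b]} :
    z ∈ I ↔ ∃ c : Fin 4 → ℤ, Fintype.linearCombination ℤ v c = z := by
  rw [← LinearMap.mem_range, Fintype.range_linearCombination, hv.span_eq]

theorem linearCombination_injective (hv : IsGramBasis I v A) :
    Function.Injective (Fintype.linearCombination ℤ v) :=
  (hv.linearIndependent.restrict_scalars' ℤ).fintypeLinearCombination_injective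

theorem exists_generator_mod_mul_right (hv : IsGramBasis I v A)
    (he : IsGramBasis R e G) {C : Matrix (Fin 4) (Fin 4) ℤ}
    (hC : ∀ i, e i * x = ∑ j, C.map (Int.cast : ℤ → ℚ) i j • v j)
    {p k : ℕ} (hp : p.Prime) (hk : k ≠ 0) (hdet : C.det.natAbs = p * k) :
    ∃ y ∈ I, (∀ z ∈ I, ∃ r ∈ R, ∃ l : ℤ, k • z = r * x + l • y) ∧
      ∀ l : ℤ, ∀ r ∈ R, l • y = r * x → (p : ℤ) ∣ l := by
  obtain ⟨y, hgen, hord⟩ := exists_cyclic_generator_of_det_eq_prime_mul hp hk hdet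
  refine ⟨Fintype.linearCombination ℤ v y, hv.mem_iff.2 ⟨y, rfl⟩, fun z hz => ?_,
    fun l r hr hlr => ?_⟩
  · obtain ⟨z, rfl⟩ := hv.mem_iff.1 hz
    obtain ⟨c, l, hcl⟩ := hgen z
    refine ⟨_, he.mem_iff.2 ⟨c, rfl⟩, l, ?_⟩
    rw [← map_nsmul, hcl, map_add, map_smul, linearCombination_mul_eq_linearCombination_vecMul hC]
  · obtain ⟨c, rfl⟩ := he.mem_iff.1 hr
    rw [linearCombination_mul_eq_linearCombination_vecMul hC, ← map_smul] at hlr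
    exact hord l c (hv.linearCombination_injective hlr)

end IsGramBasis

theorem not_sq_dvd_det_of_mul_mul_transpose_eq_smul {C : Matrix (Fin 4) (Fin 4) ℤ} {m : ℤ}
    {p : ℕ} (hp : p.Prime) (hN : Squarefree N) (hG : G.det = (N : ℤ) ^ 2)
    (h : C * A * Cᵀ = m • G) (hpm : ¬ (p : ℤ) ∣ m) : ¬ (p : ℤ) ^ 2 ∣ C.det := by
  intro hsq
  refine not_pow_three_dvd_sq_of_squarefree hp hN ?_
  have hcop : IsCoprime (p : ℤ) m := (Nat.prime_iff_prime_int.1 hp).coprime_iff_not_dvd.2 hpm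
  refine (hcop.pow (m := 3) (n := 4)).dvd_of_dvd_mul_left ?_
  have hdet := det_sq_mul_det_eq_of_mul_mul_transpose_eq_smul h
  rw [hG, Fintype.card_fin] at hdet
  calc (p : ℤ) ^ 3 ∣ ((p : ℤ) ^ 2) ^ 2 := ⟨p, by ring⟩
    _ ∣ C.det ^ 2 * A.det := (pow_dvd_pow_of_dvd hsq 2).mul_right _
    _ = m ^ 4 * (N : ℤ) ^ 2 := hdet

namespace IsNormalizedLeftIdeal

theorem mem_intSubring_of_forall_mul_nrd (hI : IsNormalizedLeftIdeal R I) {q : ℚ}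
    (h : ∀ x ∈ I, q * nrd x ∈ intSubring) : q ∈ intSubring := by
  have hle : Submodule.span ℤ (nrd '' (I : Set ℍ[ℚ,a,b])) ≤
      (intSubring.toAddSubgroup.comap (AddMonoidHom.mulLeft q)).toIntSubmodule :=
    Submodule.span_le.2 (Set.forall_mem_image.2 h)
  exact mul_one q ▸ hle hI.one_mem_span_nrd

theorem exists_not_dvd_nrd (hI : IsNormalizedLeftIdeal R I) {p : ℕ} (hp : p.Prime) :
    ∃ x ∈ I, ∃ m : ℤ, nrd x = m ∧ ¬ (p : ℤ) ∣ m := by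
  by_contra! h
  have hp0 : (p : ℤ) ≠ 0 := Nat.cast_ne_zero.2 hp.ne_zero
  have hmem : ((1 : ℤ) / (p : ℤ) : ℚ) ∈ intSubring := by
    refine hI.mem_intSubring_of_forall_mul_nrd fun x hx => ?_
    obtain ⟨m, hm⟩ := mem_intSubring.1 (hI.nrd_mem_intSubring x hx)
    rw [hm, Int.cast_one, one_div_mul_eq_div, intCast_div_mem_intSubring hp0]
    exact h x hx m hm
  exact hp.one_lt.ne' (Int.natCast_dvd_natCast.1 ((intCast_div_mem_intSubring hp0).1 hmem) |>
    Nat.dvd_one.1)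

theorem qbil_mem_intSubring (hI : IsNormalizedLeftIdeal R I) (hx : x ∈ I) (hy : y ∈ I) :
    qbil x y ∈ intSubring := by
  rw [← one_mul (qbil x y)]
  exact mul_qbil_mem_intSubring
    (fun z hz => (one_mul (nrd z)).symm ▸ hI.nrd_mem_intSubring z hz) hx hy

theorem exists_isGramBasis (hI : IsNormalizedLeftIdeal R I) : ∃ v A, IsGramBasis I v A :=
  Rep.exists_isGramBasis hI.isLattice fun _ hx _ hy => hI.qbil_mem_intSubring hx hy

theorem mem_leftOrder_iff (hI : IsNormalizedLeftIdeal R I) : r ∈ R ↔ ∀ x ∈ I, r * x ∈ I :=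
  (Set.ext_iff.1 hI.leftOrderSet_eq r).symm

theorem mul_mem (hI : IsNormalizedLeftIdeal R I) (hr : r ∈ R) (hx : x ∈ I) : r * x ∈ I :=
  hI.mem_leftOrder_iff.1 hr x hx

theorem mul_star_mul_mem (hI : IsNormalizedLeftIdeal R I) (hx : x ∈ I) (hy : y ∈ I) :
    x * star y * x ∈ I := by
  obtain ⟨k, hk⟩ := mem_intSubring.1 (hI.qbil_mem_intSubring hx hy)
  obtain ⟨m, hm⟩ := mem_intSubring.1 (hI.nrd_mem_intSubring x hx)
  rw [mul_star_mul_eq, hk, hm, Int.cast_smul_eq_zsmul, Int.cast_smul_eq_zsmul]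
  exact sub_mem (I.smul_mem k hx) (I.smul_mem m hy)

theorem mul_star_mul_mul_mem (hI : IsNormalizedLeftIdeal R I) (hR : IsHereditaryOrder R N)
    (hx : x ∈ I) (hy : y ∈ I) (hr : r ∈ R) : y * star x * (r * x) ∈ I := by
  have hrx : star r * x ∈ I := hI.mul_mem (hR.star_mem hr) hx
  obtain ⟨k, hk⟩ := mem_intSubring.1 (hI.qbil_mem_intSubring hy hrx)
  have hswap : y * star x * r = k • (1 : ℍ[ℚ,a,b]) - star r * x * star y := by
    rw [← Int.cast_smul_eq_zsmul ℚ, ← hk, ← mul_star_add_mul_star, star_mul, star_star,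
      add_sub_cancel_right, mul_assoc]
  have heq : y * star x * (r * x) = k • x - star r * (x * star y * x) := by
    rw [← mul_assoc, hswap, sub_mul, smul_mul_assoc, one_mul]
    simp only [mul_assoc]
  exact heq ▸ sub_mem (I.smul_mem k hx) (hI.mul_mem (hR.star_mem hr) (hI.mul_star_mul_mem hx hy))

theorem dvd_mul_nrd_of_generator (hI : IsNormalizedLeftIdeal R I) (hR : IsHereditaryOrder R N)
    {m : ℤ} (hx : x ∈ I) (hm : nrd x = m) {p k : ℕ} (hy : y ∈ I)
    (hgen : ∀ z ∈ I, ∃ r ∈ R, ∃ l : ℤ, k • z = r * x + l • y)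
    (hord : ∀ l : ℤ, ∀ r ∈ R, l • y = r * x → (p : ℤ) ∣ l) : (p : ℤ) ∣ k * m := by
  have hmem : k • (y * star x) ∈ R := by
    refine hI.mem_leftOrder_iff.2 fun z hz => ?_
    obtain ⟨r, hr, l, hz⟩ := hgen z hz
    rw [smul_mul_assoc, ← mul_smul_comm, hz, mul_add, mul_smul_comm]
    exact add_mem (hI.mul_star_mul_mul_mem hR hx hy hr) (I.smul_mem l (hI.mul_star_mul_mem hy hx))
  refine hord _ _ hmem ?_
  rw [smul_mul_assoc, mul_assoc, star_mul_self_eq, hm, mul_smul, natCast_zsmul, mul_smul_comm,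
    mul_one, Int.cast_smul_eq_zsmul]

theorem exists_locally_principal (hI : IsNormalizedLeftIdeal R I) (hR : IsHereditaryOrder R N)
    (he : IsGramBasis R e G) (hG : G.det = (N : ℤ) ^ 2) (hv : IsGramBasis I v A) {p : ℕ}
    (hp : p.Prime) :
    ∃ (C : Matrix (Fin 4) (Fin 4) ℤ) (m : ℤ),
      ¬ (p : ℤ) ∣ C.det ∧ ¬ (p : ℤ) ∣ m ∧ C * A * Cᵀ = m • G := by
  have hp' : Prime (p : ℤ) := Nat.prime_iff_prime_int.1 hp
  obtain ⟨x, hx, m, hm, hpm⟩ := hI.exists_not_dvd_nrd hp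
  obtain ⟨C, hC, hgram⟩ := hv.exists_comb_mul_right he hm fun r hr => hI.mul_mem hr hx
  refine ⟨C, m, fun hpC => ?_, hpm, hgram⟩
  obtain ⟨k, hk⟩ := Int.natCast_dvd.1 hpC
  have hpk : ¬ p ∣ k := by
    rintro ⟨l, rfl⟩
    exact not_sq_dvd_det_of_mul_mul_transpose_eq_smul hp hR.squarefree hG hgram hpm
      (Int.natCast_dvd.2 ⟨l, by rw [hk]; ring⟩)
  have hk0 : k ≠ 0 := fun h0 => hpk (h0 ▸ dvd_zero p)
  obtain ⟨y, hy, hgen, hord⟩ := hv.exists_generator_mod_mul_right he hC hp hk0 hk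
  have hdvd := hI.dvd_mul_nrd_of_generator hR hx hm hy hgen hord
  exact (hp'.dvd_or_dvd hdvd).elim (fun h => hpk (Int.natCast_dvd_natCast.1 h)) hpm

theorem dvd_det_of_dvd (hI : IsNormalizedLeftIdeal R I) (hR : IsHereditaryOrder R N)
    (hv : IsGramBasis I v A) {p : ℕ} (hp : p.Prime) (hpN : p ∣ N) : (p : ℤ) ∣ A.det := by
  obtain ⟨e, G, he, hG⟩ := hR.exists_isGramBasis
  obtain ⟨C, m, hpC, -, hgram⟩ := hI.exists_locally_principal hR he hG hv hp
  have hp' : Prime (p : ℤ) := Nat.prime_iff_prime_int.1 hp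
  have hdvd : (p : ℤ) ∣ C.det ^ 2 * A.det := by
    rw [det_sq_mul_det_eq_of_mul_mul_transpose_eq_smul hgram, hG]
    exact ((Int.natCast_dvd_natCast.2 hpN).pow two_ne_zero).mul_left _
  exact (hp'.dvd_or_dvd hdvd).resolve_left fun h => hpC (hp'.dvd_of_dvd_pow h)

theorem zpEquiv (hI : IsNormalizedLeftIdeal R I) {J : Submodule ℤ ℍ[ℚ,a,b]}
    (hJ : IsNormalizedLeftIdeal R J) (hR : IsHereditaryOrder R N) {w : Fin 4 → ℍ[ℚ,a,b]}
    {B : Matrix (Fin 4) (Fin 4) ℤ} (hv : IsGramBasis I v A) (hw : IsGramBasis J w B) {p : ℕ}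
    (hp : p.Prime) : ZpEquiv p hp A B := by
  have : Fact p.Prime := ⟨hp⟩
  obtain ⟨e, G, he, hG⟩ := hR.exists_isGramBasis
  obtain ⟨C, m, hC, hm, hgram⟩ := hI.exists_locally_principal hR he hG hv hp
  obtain ⟨C', m', hC', hm', hgram'⟩ := hJ.exists_locally_principal hR he hG hw hp
  rw [← isUnit_intCast_padicInt] at hC hC' hm hm'
  obtain ⟨u, hu⟩ : (m : ℤ_[p]) ∣ m' := hm.dvd
  obtain ⟨U, hU, hgramU⟩ := hR.exists_padic_similitude he hG (isUnit_of_mul_isUnit_right (hu ▸ hm'))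
  rw [Int.cast_det] at hC hC'
  exact exists_transpose_mul_mul_eq_of_similitudes (map_intCast_mul_mul_transpose hgram)
    (hu ▸ map_intCast_mul_mul_transpose hgram') hgramU hC hC' hU

theorem mul_star_mem_dual (hI : IsNormalizedLeftIdeal R I) (hy : y ∈ dual I) (hx : x ∈ I) :
    y * star x ∈ dual R :=
  mem_dual.2 fun r hr => by
    rw [qbil_mul_right, star_star]
    exact mem_dual.1 hy _ (hI.mul_mem hr hx)

theorem mul_nrd_mem_intSubring_of_mem_dual (hI : IsNormalizedLeftIdeal R I)
    (hR : IsHereditaryOrder R N) (hy : y ∈ dual I) : N * nrd y ∈ intSubring :=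
  hI.mem_intSubring_of_forall_mul_nrd fun x hx => by
    rw [mul_assoc, ← nrd_star x, ← nrd_mul]
    exact hR.mul_nrd_mem_intSubring_of_mem_dual (hI.mul_star_mem_dual hy hx)

end IsNormalizedLeftIdeal

end Ideal

/-! ### Partial duals -/

section PartialDual

variable {a b : ℚ} {R I : Submodule ℤ ℍ[ℚ,a,b]} {N s t : ℕ} {x y : ℍ[ℚ,a,b]}

/-- The lattice `I^# ∩ s⁻¹I`, which is the partial dual `I^# ∩ I[1/s]` when `st` annihilates
`I^#/I` for some `t` coprime to `s`. -/
def partialDual (I : Submodule ℤ ℍ[ℚ,a,b]) (s : ℕ) : Submodule ℤ ℍ[ℚ,a,b] :=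
  dual I ⊓ I.comap (LinearMap.lsmul ℤ ℍ[ℚ,a,b] s)

theorem mem_partialDual : y ∈ partialDual I s ↔ y ∈ dual I ∧ s • y ∈ I := by
  simp [partialDual]

theorem coe_partialDual (hst : s.Coprime t) (h : ∀ y ∈ dual I, (s * t) • y ∈ I) :
    (partialDual I s : Set ℍ[ℚ,a,b]) = dualLattice I ∩ locInv s I := by
  ext y
  rw [SetLike.mem_coe, mem_partialDual, ← coe_dual]
  refine and_congr_right fun hy => ⟨fun hsy => ⟨1, ?_⟩, fun ⟨k, hk⟩ => ?_⟩
  · rwa [pow_one, Nat.cast_smul_eq_nsmul]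
  · have hpow : s ^ (k + 1) • y ∈ I := by
      rw [pow_succ', mul_smul]
      exact I.nsmul_mem (by exact_mod_cast hk) s
    exact gcd_pow_mul_eq_left hst k.succ_ne_zero ▸ gcd_nsmul_mem hpow (h y hy)

theorem nsmul_mem_partialDual (h : (s * t) • y ∈ I) (hy : y ∈ dual I) :
    t • y ∈ partialDual I s :=
  mem_partialDual.2 ⟨(dual I).nsmul_mem hy t, by rwa [← mul_smul]⟩

namespace IsNormalizedLeftIdeal

theorem le_partialDual (hI : IsNormalizedLeftIdeal R I) : I ≤ partialDual I s := fun _ hx =>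
  mem_partialDual.2
    ⟨mem_dual.2 fun _ hy => hI.qbil_mem_intSubring hx hy, I.nsmul_mem hx s⟩

theorem nsmul_mem_of_mem_dual (hI : IsNormalizedLeftIdeal R I) (ha : a ≠ 0) (hb : b ≠ 0)
    (hR : IsHereditaryOrder R N) (hy : y ∈ dual I) : N • y ∈ I :=
  Rep.nsmul_mem_of_mem_dual ha hb hI.isLattice
    (fun _ hz => hI.mul_nrd_mem_intSubring_of_mem_dual hR hz) hy

theorem mul_mem_partialDual (hI : IsNormalizedLeftIdeal R I) (hR : IsHereditaryOrder R N)
    {r : ℍ[ℚ,a,b]} (hr : r ∈ R) (hy : y ∈ partialDual I s) : r * y ∈ partialDual I s := by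
  obtain ⟨hdual, hsy⟩ := mem_partialDual.1 hy
  refine mem_partialDual.2 ⟨mem_dual.2 fun x hx => ?_, ?_⟩
  · rw [qbil_mul_left]
    exact mem_dual.1 hdual _ (hI.mul_mem (hR.star_mem hr) hx)
  · rw [← mul_smul_comm]
    exact hI.mul_mem hr hsy

theorem leftOrderSet_partialDual (hI : IsNormalizedLeftIdeal R I) (ha : a ≠ 0) (hb : b ≠ 0)
    (hR : IsHereditaryOrder R (s * t)) :
    leftOrderSet (partialDual I s : Set ℍ[ℚ,a,b]) = (R : Set ℍ[ℚ,a,b]) := by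
  refine Set.Subset.antisymm (fun z hz => ?_) fun r hr y hy => hI.mul_mem_partialDual hR hr hy
  replace hz : ∀ y ∈ partialDual I s, z * y ∈ partialDual I s := hz
  have hs : s • z ∈ R := hI.mem_leftOrder_iff.2 fun x hx => by
    rw [smul_mul_assoc]
    exact (mem_partialDual.1 (hz x (hI.le_partialDual hx))).2
  have ht_star : t • star z ∈ R := hI.mem_leftOrder_iff.2 fun x hx => by
    rw [← dual_dual ha hb hI.isLattice, mem_dual]
    intro y hy
    have hty := nsmul_mem_partialDual (hI.nsmul_mem_of_mem_dual ha hb hR hy) hy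
    rw [qbil_mul_left, star_nsmul, star_star, smul_mul_assoc, ← mul_smul_comm, qbil_comm]
    exact mem_dual.1 (mem_partialDual.1 (hz _ hty)).1 x hx
  have ht := hR.star_mem ht_star
  rw [star_nsmul, star_star] at ht
  have hgcd := gcd_nsmul_mem hs ht
  rwa [(Nat.coprime_of_squarefree_mul hR.squarefree).gcd_eq_one, one_smul] at hgcd

theorem mul_nrd_mem_intSubring_of_mem_partialDual (hI : IsNormalizedLeftIdeal R I)
    (hR : IsHereditaryOrder R (s * t)) (hy : y ∈ partialDual I s) : s * nrd y ∈ intSubring := by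
  obtain ⟨hdual, hsy⟩ := mem_partialDual.1 hy
  have hsq : (s ^ 2 : ℕ) * nrd y ∈ intSubring := by
    rw [Nat.cast_pow, ← nrd_smul, Nat.cast_smul_eq_nsmul]
    exact hI.nrd_mem_intSubring _ hsy
  exact gcd_pow_mul_eq_left (Nat.coprime_of_squarefree_mul hR.squarefree) two_ne_zero ▸
    gcd_mul_mem_intSubring hsq (hI.mul_nrd_mem_intSubring_of_mem_dual hR hdual)

theorem not_forall_mul_nrd_mem_intSubring (hI : IsNormalizedLeftIdeal R I) (ha : a ≠ 0)
    (hb : b ≠ 0) {p k : ℕ} (hp : p.Prime) (hR : IsHereditaryOrder R (p * k)) :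
    ¬ ∀ y ∈ dual I, k * nrd y ∈ intSubring := by
  intro h
  obtain ⟨v, A, hv⟩ := hI.exists_isGramBasis
  have hdvd : (p : ℤ) ∣ (k : ℤ) ^ 4 := (hI.dvd_det_of_dvd hR hv hp (dvd_mul_right p k)).trans <|
    hv.det_dvd_pow_of_nsmul_dual_le ha hb fun y hy =>
      Rep.nsmul_mem_of_mem_dual ha hb hI.isLattice h hy
  have hpk : p ∣ k := hp.dvd_of_dvd_pow (Int.natCast_dvd_natCast.1 (by exact_mod_cast hdvd))
  exact (hp.coprime_iff_not_dvd.1 (Nat.coprime_of_squarefree_mul hR.squarefree)) hpk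

theorem mul_nrd_mem_intSubring_of_forall_dvd (hI : IsNormalizedLeftIdeal R I) (ha : a ≠ 0)
    (hb : b ≠ 0) {p l : ℕ} (hp : p.Prime) (hR : IsHereditaryOrder R (p * l * t))
    (h : ∀ y ∈ partialDual I (p * l), ∀ m : ℤ, (p * l : ℕ) * nrd y = m → (p : ℤ) ∣ m)
    (hy : y ∈ dual I) : (l * t : ℕ) * nrd y ∈ intSubring := by
  have hp0 : (p : ℚ) ≠ 0 := Nat.cast_ne_zero.2 hp.ne_zero
  have ht : (l * t * t : ℕ) * nrd y ∈ intSubring := by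
    have hty := nsmul_mem_partialDual (hI.nsmul_mem_of_mem_dual ha hb hR hy) hy
    obtain ⟨m, hm⟩ := mem_intSubring.1 (hI.mul_nrd_mem_intSubring_of_mem_partialDual hR hty)
    obtain ⟨k, rfl⟩ := h _ hty m hm
    refine mem_intSubring.2 ⟨k, mul_left_cancel₀ hp0 ?_⟩
    rw [← Nat.cast_smul_eq_nsmul ℚ, nrd_smul] at hm
    push_cast at hm ⊢
    linear_combination hm
  have hpN : (l * t * p : ℕ) * nrd y ∈ intSubring := by
    rw [mul_comm (l * t) p, ← mul_assoc p l t]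
    exact hI.mul_nrd_mem_intSubring_of_mem_dual hR hy
  have hcop : t.Coprime p :=
    ((Nat.coprime_of_squarefree_mul hR.squarefree).coprime_dvd_left (dvd_mul_right p l)).symm
  simpa only [Nat.gcd_mul_left, hcop.gcd_eq_one, mul_one] using gcd_mul_mem_intSubring ht hpN

theorem exists_mem_partialDual_not_dvd_mul_nrd (hI : IsNormalizedLeftIdeal R I) (ha : a ≠ 0)
    (hb : b ≠ 0) (hR : IsHereditaryOrder R (s * t)) {p : ℕ} (hp : p.Prime) :
    ∃ y ∈ partialDual I s, ∃ m : ℤ, s * nrd y = m ∧ ¬ (p : ℤ) ∣ m := by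
  by_cases hps : p ∣ s
  · obtain ⟨l, rfl⟩ := hps
    by_contra! h
    exact hI.not_forall_mul_nrd_mem_intSubring ha hb hp (mul_assoc p l t ▸ hR) fun y hy =>
      hI.mul_nrd_mem_intSubring_of_forall_dvd ha hb hp hR h hy
  · obtain ⟨x, hx, m, hm, hpm⟩ := hI.exists_not_dvd_nrd hp
    refine ⟨x, hI.le_partialDual hx, s * m, by rw [hm]; push_cast; rfl, fun hdvd => ?_⟩
    exact ((Nat.prime_iff_prime_int.1 hp).dvd_or_dvd hdvd).elim
      (fun h => hps (Int.natCast_dvd_natCast.1 h)) hpm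

end IsNormalizedLeftIdeal

end PartialDual

/-! ### The class of a partial dual -/

section Rescaling

variable {a b : ℚ} {R I K : Submodule ℤ ℍ[ℚ,a,b]} {s t : ℕ}

theorem isGramBasis_mul_inv {u : ℍ[ℚ,a,b]ˣ} (hu : s * nrd (u : ℍ[ℚ,a,b]) = 1)
    {v : Fin 4 → ℍ[ℚ,a,b]} {A : Matrix (Fin 4) (Fin 4) ℤ} (hv : LinearIndependent ℚ v)
    (hspan : Submodule.span ℤ (Set.range v) = K.map (LinearMap.mulRight ℤ (u : ℍ[ℚ,a,b])))
    (hA : ∀ i j, (A i j : ℚ) = s * qbil (v i) (v j)) :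
    IsGramBasis K (fun i => v i * ↑u⁻¹) A where
  linearIndependent :=
    hv.map_injOn (LinearMap.mulRight ℚ (↑u⁻¹ : ℍ[ℚ,a,b]))
      u⁻¹.mulRight_bijective.injective.injOn
  span_eq := by
    have hcancel : LinearMap.mulRight ℤ (↑u⁻¹ : ℍ[ℚ,a,b]) ∘ₗ LinearMap.mulRight ℤ ↑u = .id := by
      ext x <;> simp
    calc Submodule.span ℤ (Set.range fun i => v i * ↑u⁻¹)
        = (Submodule.span ℤ (Set.range v)).map (LinearMap.mulRight ℤ ↑u⁻¹) := by
          rw [Submodule.map_span, ← Set.range_comp]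
          rfl
      _ = K := by rw [hspan, ← Submodule.map_comp, hcancel, Submodule.map_id]
  gram_eq := by
    have hinv : nrd (↑u⁻¹ : ℍ[ℚ,a,b]) = s := by
      have hmul : nrd (u : ℍ[ℚ,a,b]) * nrd (↑u⁻¹ : ℍ[ℚ,a,b]) = 1 := by
        rw [← nrd_mul, Units.mul_inv, nrd_one]
      exact (left_inv_eq_right_inv hu hmul).symm
    rw [gram_mul_right, hinv]
    ext i j
    exact (hA i j).symm

namespace IsNormalizedLeftIdeal

theorem mul_nrd_eq_one (hK : IsNormalizedLeftIdeal R K) (ha : a < 0) (hb : b < 0)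
    {u : ℍ[ℚ,a,b]} (hint : ∀ x ∈ K, s * nrd (x * u) ∈ intSubring)
    (hprim : ∀ p : ℕ, p.Prime → ∃ x ∈ K, ∃ m : ℤ, s * nrd (x * u) = m ∧ ¬ (p : ℤ) ∣ m) :
    s * nrd u = 1 := by
  have hscale (x : ℍ[ℚ,a,b]) : s * nrd (x * u) = s * nrd u * nrd x := by
    rw [nrd_mul]
    ring
  obtain ⟨c, hc⟩ := mem_intSubring.1 <|
    hK.mem_intSubring_of_forall_mul_nrd fun x hx => hscale x ▸ hint x hx
  have hc_nonneg : 0 ≤ c := by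
    have : 0 ≤ s * nrd u := mul_nonneg s.cast_nonneg (nrd_nonneg ha hb u)
    exact_mod_cast hc ▸ this
  have hc_unit : c.natAbs = 1 := by
    refine Nat.eq_one_iff_not_exists_prime_dvd.2 fun p hp hpc => ?_
    obtain ⟨x, hx, m, hm, hpm⟩ := hprim p hp
    obtain ⟨k, hk⟩ := mem_intSubring.1 (hK.nrd_mem_intSubring x hx)
    rw [hscale, hc, hk] at hm
    exact hpm ((Int.natCast_dvd.2 hpc).trans ⟨k, by exact_mod_cast hm.symm⟩)
  rw [hc, Int.cast_eq_one]
  omega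

theorem mul_nrd_eq_one_of_partialDual_eq_map (hI : IsNormalizedLeftIdeal R I)
    (hK : IsNormalizedLeftIdeal R K) (ha : a < 0) (hb : b < 0)
    (hR : IsHereditaryOrder R (s * t)) {u : ℍ[ℚ,a,b]}
    (h : partialDual I s = K.map (LinearMap.mulRight ℤ u)) : s * nrd u = 1 := by
  refine hK.mul_nrd_eq_one ha hb (fun x hx => ?_) fun p hp => ?_
  · exact hI.mul_nrd_mem_intSubring_of_mem_partialDual hR (h ▸ Submodule.mem_map_of_mem hx)
  · obtain ⟨y, hy, hm⟩ := hI.exists_mem_partialDual_not_dvd_mul_nrd ha.ne hb.ne hR hp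
    obtain ⟨x, hx, rfl⟩ := Submodule.mem_map.1 (h ▸ hy)
    exact ⟨x, hx, hm⟩

theorem inSameGenus (hI : IsNormalizedLeftIdeal R I) (hK : IsNormalizedLeftIdeal R K)
    (ha : a < 0) (hb : b < 0) {N : ℕ} (hR : IsHereditaryOrder R N) {v w : Fin 4 → ℍ[ℚ,a,b]}
    {A B : Matrix (Fin 4) (Fin 4) ℤ} (hv : IsGramBasis I v A) (hw : IsGramBasis K w B) :
    InSameGenus A B :=
  ⟨hv.posDefMat ha hb, hw.posDefMat ha hb, fun _ hp => hI.zpEquiv hK hR hv hw hp⟩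

end IsNormalizedLeftIdeal

end Rescaling

theorem zEquiv_refl {m : ℕ} (A : Matrix (Fin m) (Fin m) ℤ) : ZEquiv A A :=
  ⟨1, by simp, by simp⟩

namespace EichlerSetting

variable {N₁ N₂ : ℕ} (S : EichlerSetting N₁ N₂) (i j : Fin S.h)

theorem isHereditaryOrder_Rord : IsHereditaryOrder (S.Rord i) (N₁ * N₂) :=
  ⟨S.Rord_order i, S.Rord_disc i, S.squarefree⟩

theorem isNormalizedLeftIdeal_I : IsNormalizedLeftIdeal (S.Rord i) (S.I i j) where
  isLattice := S.I_lattice i j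
  leftOrderSet_eq := S.I_left i j
  nrd_mem_intSubring x hx := mem_intSubring.2 (S.I_nrd_integral i j x hx)
  one_mem_span_nrd := S.I_nrd_primitive i j

theorem coe_partialDual_I {s : ℕ} (hs : s ∣ N₁ * N₂) :
    (partialDual (S.I i j) s : Set ℍ[ℚ,S.a,S.b]) = S.pd i j s := by
  obtain ⟨t, hst⟩ := hs
  obtain ⟨ha, hb⟩ := neg_of_ramifiedAtInfinity S.ram_inf
  have hR := hst ▸ S.isHereditaryOrder_Rord i
  exact coe_partialDual (Nat.coprime_of_squarefree_mul hR.squarefree) fun _ hy =>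
    (S.isNormalizedLeftIdeal_I i j).nsmul_mem_of_mem_dual ha.ne hb.ne hR hy

end EichlerSetting

/-- For every `s ∣ N`, the rescaled partial dual
`I_ij^{*,s} = (I_ij^# ∩ I_ij[1/s], s·n)` lies in the same genus of quaternary quadratic
lattices as the `I_ij`, and hence is isometric to some lattice `I_{i'j'}`. -/
theorem rescaled_partial_dual_in_genus (N₁ N₂ : ℕ) (S : EichlerSetting N₁ N₂)
    (i j : Fin S.h) (s : ℕ) (hs : s ∣ N₁ * N₂)
    (A A' : Matrix (Fin 4) (Fin 4) ℤ)
    (hA : IsGramOf (S.I i j : Set ℍ[ℚ, S.a, S.b]) A)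
    (hA' : IsGramOfScaled s (S.pd i j s) A') :
    InSameGenus A A' ∧
      ∃ (i' j' : Fin S.h) (A'' : Matrix (Fin 4) (Fin 4) ℤ),
        IsGramOf (S.I i' j' : Set ℍ[ℚ, S.a, S.b]) A'' ∧ ZEquiv A' A'' := by
  obtain ⟨ha, hb⟩ := neg_of_ramifiedAtInfinity S.ram_inf
  have hI := S.isNormalizedLeftIdeal_I i
  obtain ⟨v, hv⟩ := isGramOf_iff_exists_isGramBasis.1 hA
  obtain ⟨v', hli, hspan, hA'⟩ := hA'
  rw [← S.coe_partialDual_I i j hs, Submodule.span_eq] at hspan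
  obtain ⟨t, hst⟩ := hs
  have hR : IsHereditaryOrder (S.Rord i) (s * t) := hst ▸ S.isHereditaryOrder_Rord i
  obtain ⟨j', u, hu⟩ := S.classes_complete i (partialDual (S.I i j) s) ⟨v', hli, hspan⟩
    ((hI j).leftOrderSet_partialDual ha.ne hb.ne hR)
  have hscale := (hI j).mul_nrd_eq_one_of_partialDual_eq_map (hI j') ha hb hR hu
  have hw := isGramBasis_mul_inv hscale hli (hspan.trans hu) hA'
  exact ⟨(hI j).inSameGenus (hI j') ha hb hR hv hw, i, j', A',
    isGramOf_iff_exists_isGramBasis.2 ⟨_, hw⟩, zEquiv_refl A'⟩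

end Rep
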